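/- arXiv:2312.06508 — 5 statements merged into one kernel-verified Lean document; each statement's English description precedes it below -/
import Mathlib

section
/- Suppose each f_i : ℝ^d → ℝ is convex and differentiable and each h_i : ℝ^d → ℝ ∪ {+∞} is proper, closed, and convex; set F(x) = Σ_{i=1}^n (f_i(x_i) + h_i(x_i)) for x = (x_1,…,x_n) ∈ (ℝ^d)^n. Assume F is bounded below, the consensus problem min_{z∈ℝ^d} Σ_i (f_i(z) + h_i(z)) has an optimal solution with optimal value F_opt, and let W be symmetric, entrywise nonnegative, stochastic with β ∈ [0,1) satisfying ‖Wv‖ ≤ β‖v‖ for all v ⟂ 𝟙. If α > 0 and x* = (x*_1,…,x*_n) minimizes x ↦ F(x) + (1/(2α))⟨x, (I − 𝐖)x⟩ over (ℝ^d)^n, then F(x*) ≤ F_opt and, for every i, ‖x*_i − x̄*‖ ≤ sqrt( 2α(F_opt − inf F) / (1 − β) ), where x̄* = (1/n)Σ_i x*_i. -/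
open scoped RealInnerProductSpace

/-- A function `h : ℝ^d → ℝ ∪ {+∞}` (modeled as `EReal`-valued, never `⊥`) is proper,
closed (lower semicontinuous), and convex. -/
def ProperClosedConvex {d : ℕ} (h : EuclideanSpace ℝ (Fin d) → EReal) : Prop :=
  (∃ x, h x ≠ ⊤) ∧ (∀ x, h x ≠ ⊥) ∧ LowerSemicontinuous h ∧
    ∀ x y : EuclideanSpace ℝ (Fin d), ∀ t : ℝ, 0 ≤ t → t ≤ 1 →
      h (t • x + (1 - t) • y) ≤ (t : EReal) * h x + ((1 - t : ℝ) : EReal) * h y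

lemma scalar_gap {n : ℕ} (hn : 0 < n) (W : Fin n → Fin n → ℝ)
    (hWsymm : ∀ i j, W i j = W j i)
    (hWstoch : ∀ i, ∑ j, W i j = 1)
    (β : ℝ)
    (hWspec : ∀ v : Fin n → ℝ, (∑ i, v i) = 0 →
      Real.sqrt (∑ i, (∑ j, W i j * v j) ^ 2) ≤ β * Real.sqrt (∑ i, v i ^ 2))
    (v : Fin n → ℝ) :
    (1 - β) * ∑ i, (v i - (n : ℝ)⁻¹ * ∑ j, v j) ^ 2
      ≤ ∑ i, v i * (v i - ∑ j, W i j * v j) := by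
  have hn' : (n : ℝ) ≠ 0 := by positivity
  set m : ℝ := (n : ℝ)⁻¹ * ∑ j, v j with hm
  have hsum : ∑ i, (v i - m) = 0 := by
    rw [Finset.sum_sub_distrib]
    simp only [Finset.sum_const, Finset.card_univ, Fintype.card_fin, nsmul_eq_mul, hm]
    field_simp
    ring
  have hcol : ∑ i, ∑ j, W i j * v j = ∑ j, v j := by
    rw [Finset.sum_comm]
    refine Finset.sum_congr rfl fun j _ => ?_
    rw [← Finset.sum_mul]
    have : ∑ i, W i j = 1 := by rw [← hWstoch j]; exact Finset.sum_congr rfl fun i _ => hWsymm i j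
    rw [this, one_mul]
  have hWu : ∀ i, ∑ j, W i j * (v j - m) = (∑ j, W i j * v j) - m := by
    intro i
    simp only [mul_sub, Finset.sum_sub_distrib]
    rw [← Finset.sum_mul, hWstoch, one_mul]
  have key : ∑ i, v i * (v i - ∑ j, W i j * v j)
      = ∑ i, (v i - m) ^ 2 - ∑ i, (v i - m) * ∑ j, W i j * (v j - m) := by
    have e : ∀ i, v i * (v i - ∑ j, W i j * v j)
        = (v i - m) ^ 2 - (v i - m) * (∑ j, W i j * (v j - m))
          + m * (v i - ∑ j, W i j * v j) := by
      intro i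
      rw [hWu]; ring
    rw [Finset.sum_congr rfl fun i _ => e i, Finset.sum_add_distrib, Finset.sum_sub_distrib,
      ← Finset.mul_sum, Finset.sum_sub_distrib, hcol]
    ring
  have cs := Real.sum_mul_le_sqrt_mul_sqrt Finset.univ (fun i => v i - m)
    (fun i => ∑ j, W i j * (v j - m))
  have sp := hWspec (fun i => v i - m) hsum
  have h0 := Real.sqrt_nonneg (∑ i, (v i - m) ^ 2)
  have h1 : 0 ≤ ∑ i, (v i - m) ^ 2 := Finset.sum_nonneg fun i _ => sq_nonneg _
  have h2 := Real.mul_self_sqrt h1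
  have h3 := mul_le_mul_of_nonneg_left sp h0
  rw [key]
  have h4 : ∀ a b : ℝ, a * (β * a) = β * (a * a) := fun a _ => by ring
  rw [h4 _ 0, h2] at h3
  linarith

lemma vec_gap {n d : ℕ} (hn : 0 < n) (W : Fin n → Fin n → ℝ)
    (hWsymm : ∀ i j, W i j = W j i)
    (hWstoch : ∀ i, ∑ j, W i j = 1)
    (β : ℝ)
    (hWspec : ∀ v : Fin n → ℝ, (∑ i, v i) = 0 →
      Real.sqrt (∑ i, (∑ j, W i j * v j) ^ 2) ≤ β * Real.sqrt (∑ i, v i ^ 2))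
    (x : Fin n → EuclideanSpace ℝ (Fin d)) :
    (1 - β) * ∑ i, ‖x i - (n : ℝ)⁻¹ • ∑ j, x j‖ ^ 2
      ≤ ∑ i, ⟪x i, x i - (∑ j, W i j • x j)⟫ := by
  have e1 : ∑ i, ‖x i - (n : ℝ)⁻¹ • ∑ j, x j‖ ^ 2
      = ∑ k, ∑ i, (x i k - (n : ℝ)⁻¹ * ∑ j, x j k) ^ 2 := by
    rw [Finset.sum_comm]
    refine Finset.sum_congr rfl fun i _ => ?_
    rw [EuclideanSpace.real_norm_sq_eq]
    simp
  have e2 : ∑ i, ⟪x i, x i - (∑ j, W i j • x j)⟫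
      = ∑ k, ∑ i, x i k * (x i k - ∑ j, W i j * x j k) := by
    rw [Finset.sum_comm]
    refine Finset.sum_congr rfl fun i _ => ?_
    rw [PiLp.inner_apply]
    simp [mul_comm]
  rw [e1, e2, Finset.mul_sum]
  exact Finset.sum_le_sum fun k _ =>
    scalar_gap hn W hWsymm hWstoch β hWspec fun i => x i k

/-- **Lemma 1 of the paper.** Under convexity of the `fᵢ`, proper closed
convex `hᵢ`, boundedness below of `F` (with finite infimum `Finf`), existence of a
consensus optimum with value `Fopt`, and the spectral hypothesis on `W`, any minimizer
`x⋆` of the penalized problem `F(x) + (1/(2α))⟨x,(I−𝐖)x⟩` satisfies `F(x⋆) ≤ Fopt` and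
`‖x⋆ᵢ − x̄⋆‖ ≤ √(2α(Fopt − inf F)/(1 − β))` for every `i`. -/
theorem stmt3 (n d : ℕ) (hn : 0 < n)
    (f : Fin n → EuclideanSpace ℝ (Fin d) → ℝ)
    (hfconv : ∀ i, ConvexOn ℝ Set.univ (f i))
    (hfdiff : ∀ i, Differentiable ℝ (f i))
    (h : Fin n → EuclideanSpace ℝ (Fin d) → EReal)
    (hh : ∀ i, ProperClosedConvex (h i))
    (W : Fin n → Fin n → ℝ)
    (hWsymm : ∀ i j, W i j = W j i)
    (hWnonneg : ∀ i j, 0 ≤ W i j)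
    (hWstoch : ∀ i, ∑ j, W i j = 1)
    (β : ℝ) (hβ0 : 0 ≤ β) (hβ1 : β < 1)
    (hWspec : ∀ v : Fin n → ℝ, (∑ i, v i) = 0 →
      Real.sqrt (∑ i, (∑ j, W i j * v j) ^ 2) ≤ β * Real.sqrt (∑ i, v i ^ 2))
    (α : ℝ) (hα : 0 < α)
    -- `F` is bounded below, with finite infimum `Finf`
    (Finf : ℝ)
    (hFinf : IsGLB (Set.range fun x : Fin n → EuclideanSpace ℝ (Fin d) =>
      ∑ i, (((f i (x i) : ℝ) : EReal) + h i (x i))) ((Finf : ℝ) : EReal))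
    -- the consensus problem has an optimal solution, with (finite) optimal value `Fopt`
    (zstar : EuclideanSpace ℝ (Fin d)) (Fopt : ℝ)
    (hzopt : ∀ z : EuclideanSpace ℝ (Fin d),
      (∑ i, (((f i zstar : ℝ) : EReal) + h i zstar))
        ≤ ∑ i, (((f i z : ℝ) : EReal) + h i z))
    (hFopt : (∑ i, (((f i zstar : ℝ) : EReal) + h i zstar)) = ((Fopt : ℝ) : EReal))
    -- `x⋆` minimizes the penalized problem
    (xstar : Fin n → EuclideanSpace ℝ (Fin d))
    (hxstar : ∀ x : Fin n → EuclideanSpace ℝ (Fin d),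
      (∑ i, (((f i (xstar i) : ℝ) : EReal) + h i (xstar i)))
          + ((1 / (2 * α) * ∑ i, ⟪xstar i, xstar i - (∑ j, W i j • xstar j)⟫ : ℝ) : EReal)
        ≤ (∑ i, (((f i (x i) : ℝ) : EReal) + h i (x i)))
          + ((1 / (2 * α) * ∑ i, ⟪x i, x i - (∑ j, W i j • x j)⟫ : ℝ) : EReal)) :
    (∑ i, (((f i (xstar i) : ℝ) : EReal) + h i (xstar i))) ≤ ((Fopt : ℝ) : EReal) ∧
    ∀ i, ‖xstar i - (n : ℝ)⁻¹ • ∑ j, xstar j‖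
      ≤ Real.sqrt (2 * α * (Fopt - Finf) / (1 - β)) := by
  have hq := vec_gap hn W hWsymm hWstoch β hWspec xstar
  have hz := hxstar fun _ => zstar
  have hz0 : (1 / (2 * α) * ∑ i : Fin n, ⟪zstar, zstar - (∑ j, W i j • zstar)⟫ : ℝ) = 0 := by
    simp [← Finset.sum_smul, hWstoch]
  simp only [hz0, hFopt] at hz
  have hlb := hFinf.1 ⟨xstar, rfl⟩
  simp only at hlb
  set S : EReal := ∑ i, (((f i (xstar i) : ℝ) : EReal) + h i (xstar i)) with hS
  set Q : ℝ := ∑ i, ⟪xstar i, xstar i - (∑ j, W i j • xstar j)⟫ with hQ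
  clear_value S Q
  have hb : (0 : ℝ) < 1 - β := by linarith
  have hQ0 : 0 ≤ Q := le_trans (mul_nonneg hb.le (Finset.sum_nonneg fun i _ => sq_nonneg _)) hq
  induction S using EReal.rec with
  | bot => simp at hlb
  | top => exact absurd hz (by
      rw [EReal.top_add_coe, ← EReal.coe_add, top_le_iff]; exact EReal.coe_ne_top _)
  | coe s =>
    norm_cast at hz hlb
    rw [add_zero] at hz
    have hp : 0 ≤ 1 / (2 * α) * Q := by positivity
    refine ⟨by norm_cast; linarith, fun i => Real.le_sqrt_of_sq_le ?_⟩
    have hi := Finset.single_le_sum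
      (f := fun i => ‖xstar i - (n : ℝ)⁻¹ • ∑ j, xstar j‖ ^ 2)
      (fun i _ => sq_nonneg _) (Finset.mem_univ i)
    rw [le_div_iff₀ hb]
    have h1 : Q = 2 * α * (1 / (2 * α) * Q) := by field_simp
    have h2 : 2 * α * (1 / (2 * α) * Q) ≤ 2 * α * (Fopt - Finf) :=
      mul_le_mul_of_nonneg_left (by linarith) (by positivity)
    have h3 := mul_le_mul_of_nonneg_left hi hb.le
    linarith
end

section
/- Suppose each f_i : ℝ^d → ℝ is convex and differentiable, the h_i are all equal to a single proper, closed, convex function h : ℝ^d → ℝ ∪ {+∞}, W is symmetric, entrywise nonnegative, stochastic with ‖Wv‖ ≤ β‖v‖ for all v ⟂ 𝟙 and β ∈ [0,1), and α > 0. If x* = (x*_1,…,x*_n) is a fixed point of synchronous Prox-DGD, i.e., for each i, x*_i is the unique minimizer of y ↦ αh(y) + (1/2)‖y − (Σ_j w_{ij}x*_j − α∇f_i(x*_i))‖², then ‖x* − 𝐱̄*‖ ≤ (α/(1 − β))·‖g*‖, where g* = (∇f_1(x*_1),…,∇f_n(x*_n)) ∈ (ℝ^d)^n, x̄* = (1/n)Σ_i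 x*_i, and 𝐱̄* = (x̄*,…,x̄*). -/
open scoped RealInnerProductSpace

/-- `IsProxPt α h u p` says `p` minimizes `y ↦ α·h(y) + ½‖y − u‖²`, i.e.
`p = prox_{αh}(u)`. -/
def IsProxPt {d : ℕ} (α : ℝ) (h : EuclideanSpace ℝ (Fin d) → EReal)
    (u p : EuclideanSpace ℝ (Fin d)) : Prop :=
  ∀ y, (α : EReal) * h p + ((1 / 2 * ‖p - u‖ ^ 2 : ℝ) : EReal)
      ≤ (α : EReal) * h y + ((1 / 2 * ‖y - u‖ ^ 2 : ℝ) : EReal)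

lemma prox_finite {d : ℕ} {α : ℝ} (hα : 0 < α) {h : EuclideanSpace ℝ (Fin d) → EReal}
    (hh : ProperClosedConvex h) {u p : EuclideanSpace ℝ (Fin d)} (hp : IsProxPt α h u p) :
    ∃ a : ℝ, h p = (a : EReal) := by
  obtain ⟨⟨x, hx⟩, hbot, -, -⟩ := hh
  have hpt : h p ≠ ⊤ := by
    intro htop
    have h1 := hp x
    rw [htop, EReal.coe_mul_top_of_pos hα, EReal.top_add_coe, ← EReal.coe_toReal hx (hbot x)] at h1
    rw [← EReal.coe_mul, ← EReal.coe_add] at h1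
    exact EReal.coe_ne_top _ (top_le_iff.mp h1)
  exact ⟨(h p).toReal, (EReal.coe_toReal hpt (hbot p)).symm⟩

lemma prox_var {d : ℕ} {α : ℝ} (hα : 0 < α) {h : EuclideanSpace ℝ (Fin d) → EReal}
    (hh : ProperClosedConvex h) {u p q : EuclideanSpace ℝ (Fin d)} (hp : IsProxPt α h u p)
    {a b : ℝ} (ha : h p = (a : EReal)) (hb : h q = (b : EReal)) :
    α * (a - b) ≤ ⟪p - u, q - p⟫ := by
  have key : ∀ t : ℝ, 0 < t → t ≤ 1 →
      α * (a - b) ≤ ⟪p - u, q - p⟫ + t * (1 / 2 * ‖q - p‖ ^ 2) := by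
    intro t ht0 ht1
    have hc := hh.2.2.2 q p t ht0.le ht1
    have hm := hp (t • q + (1 - t) • p)
    rw [ha, hb] at hc
    have hbot := hh.2.1 (t • q + (1 - t) • p)
    rw [← EReal.coe_mul, ← EReal.coe_mul, ← EReal.coe_add] at hc
    have htop : h (t • q + (1 - t) • p) ≠ ⊤ :=
      fun e => EReal.coe_ne_top _ (top_le_iff.mp (e ▸ hc))
    rw [ha] at hm
    rw [← EReal.coe_toReal htop hbot] at hm hc
    set c := (h (t • q + (1 - t) • p)).toReal
    rw [EReal.coe_le_coe_iff] at hc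
    rw [← EReal.coe_mul, ← EReal.coe_mul, ← EReal.coe_add, ← EReal.coe_add,
      EReal.coe_le_coe_iff] at hm
    have e : t • q + (1 - t) • p - u = (p - u) + t • (q - p) := by module
    rw [e, norm_add_sq_real, inner_smul_right, norm_smul, Real.norm_of_nonneg ht0.le] at hm
    have h2 := mul_le_mul_of_nonneg_left hc hα.le
    have h3 : t * (α * (a - b)) ≤ t * (⟪p - u, q - p⟫ + t * (1 / 2 * ‖q - p‖ ^ 2)) := by
      nlinarith
    exact le_of_mul_le_mul_left h3 ht0
  by_contra hlt
  push Not at hlt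
  set K := 1 / 2 * ‖q - p‖ ^ 2 with hK
  have hK0 : 0 ≤ K := by positivity
  set δ := α * (a - b) - ⟪p - u, q - p⟫ with hδ
  have hδ0 : 0 < δ := by linarith
  have h1 := key (δ / (K + δ + 1)) (by positivity) (by rw [div_le_one (by positivity)]; linarith)
  have h2 : δ / (K + δ + 1) * K < δ := by
    rw [div_mul_eq_mul_div, div_lt_iff₀ (by positivity)]
    nlinarith
  linarith

lemma prox_mono {d : ℕ} {α : ℝ} (hα : 0 < α) {h : EuclideanSpace ℝ (Fin d) → EReal}
    (hh : ProperClosedConvex h) {u v p q : EuclideanSpace ℝ (Fin d)} (hp : IsProxPt α h u p)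
    (hq : IsProxPt α h v q) : ⟪p - q, p - q⟫ ≤ ⟪p - q, u - v⟫ := by
  obtain ⟨a, ha⟩ := prox_finite hα hh hp
  obtain ⟨b, hb⟩ := prox_finite hα hh hq
  have h1 := prox_var hα hh hp ha hb
  have h2 := prox_var hα hh hq hb ha
  have e : ⟪p - u, q - p⟫ + ⟪q - v, p - q⟫ = ⟪p - q, u - v⟫ - ⟪p - q, p - q⟫ := by
    simp only [inner_sub_left, inner_sub_right, real_inner_comm]
    rw [real_inner_comm p u, real_inner_comm q u, real_inner_comm p v, real_inner_comm q v]
    ring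
  nlinarith

lemma sum_pair {n d : ℕ} (v u : Fin n → EuclideanSpace ℝ (Fin d)) (hv : ∑ i, v i = 0) :
    ∑ i, ∑ j, ⟪v i - v j, u i - u j⟫ = 2 * n * ∑ i, ⟪v i, u i⟫ := by
  simp only [inner_sub_left, inner_sub_right, Finset.sum_sub_distrib]
  have h1 : ∑ i, ∑ j, ⟪v i, u j⟫ = 0 := by
    rw [Finset.sum_comm]
    simp [← sum_inner, hv]
  have h2 : ∑ i, ∑ j, ⟪v j, u i⟫ = 0 := by
    simp [← sum_inner, hv]
  rw [h1, h2]
  simp [← Finset.mul_sum]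
  ring

lemma sum_inner_le {n d : ℕ} (v u : Fin n → EuclideanSpace ℝ (Fin d)) :
    ∑ i, ⟪v i, u i⟫ ≤ √(∑ i, ‖v i‖ ^ 2) * √(∑ i, ‖u i‖ ^ 2) :=
  (Finset.sum_le_sum fun i _ => real_inner_le_norm (v i) (u i)).trans
    (Real.sum_mul_le_sqrt_mul_sqrt _ _ _)

/-- For convex differentiable `fᵢ` with gradients `f'ᵢ`, a single proper
closed convex `h`, and a fixed point `x⋆` of synchronous Prox-DGD
(`x⋆ᵢ = prox_{αh}(∑ⱼ wᵢⱼ x⋆ⱼ − α∇fᵢ(x⋆ᵢ))`), one has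
`‖x⋆ − 𝐱̄⋆‖ ≤ (α/(1 − β))·‖g⋆‖` where `g⋆ = (∇f₁(x⋆₁),…,∇fₙ(x⋆ₙ))`. -/
theorem stmt5 (n d : ℕ) (hn : 0 < n)
    (f : Fin n → EuclideanSpace ℝ (Fin d) → ℝ)
    (f' : Fin n → EuclideanSpace ℝ (Fin d) → EuclideanSpace ℝ (Fin d))
    (hfconv : ∀ i, ConvexOn ℝ Set.univ (f i))
    (hgrad : ∀ i x, HasGradientAt (f i) (f' i x) x)
    (h : EuclideanSpace ℝ (Fin d) → EReal)
    (hh : ProperClosedConvex h)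
    (W : Fin n → Fin n → ℝ)
    (hWsymm : ∀ i j, W i j = W j i)
    (hWnonneg : ∀ i j, 0 ≤ W i j)
    (hWstoch : ∀ i, ∑ j, W i j = 1)
    (β : ℝ) (hβ0 : 0 ≤ β) (hβ1 : β < 1)
    (hWspec : ∀ v : Fin n → ℝ, (∑ i, v i) = 0 →
      Real.sqrt (∑ i, (∑ j, W i j * v j) ^ 2) ≤ β * Real.sqrt (∑ i, v i ^ 2))
    (α : ℝ) (hα : 0 < α)
    -- `x⋆` is a fixed point of synchronous Prox-DGD
    (xstar : Fin n → EuclideanSpace ℝ (Fin d))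
    (hfix : ∀ i, IsProxPt α h
      ((∑ j, W i j • xstar j) - α • f' i (xstar i)) (xstar i)) :
    Real.sqrt (∑ i, ‖xstar i - (n : ℝ)⁻¹ • ∑ j, xstar j‖ ^ 2)
      ≤ α / (1 - β) * Real.sqrt (∑ i, ‖f' i (xstar i)‖ ^ 2) := by
  classical
  set m : EuclideanSpace ℝ (Fin d) := (n : ℝ)⁻¹ • ∑ j, xstar j with hm
  have hn' : (0 : ℝ) < n := by exact_mod_cast hn
  set v : Fin n → EuclideanSpace ℝ (Fin d) := fun i => xstar i - m with hv
  have hv0 : ∑ i, v i = 0 := by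
    simp only [hv, Finset.sum_sub_distrib, Finset.sum_const, Finset.card_univ, Fintype.card_fin, hm]
    rw [← Nat.cast_smul_eq_nsmul ℝ, smul_smul, mul_inv_cancel₀ hn'.ne', one_smul, sub_self]
  set Wv : Fin n → EuclideanSpace ℝ (Fin d) := fun i => ∑ j, W i j • v j with hWv
  have hWx : ∀ i, ∑ j, W i j • xstar j = Wv i + m := by
    intro i
    simp only [hWv, hv, smul_sub, Finset.sum_sub_distrib, ← Finset.sum_smul, hWstoch, one_smul]
    abel
  set g : Fin n → EuclideanSpace ℝ (Fin d) := fun i => f' i (xstar i) with hg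
  have hpair : ∑ i, ∑ j, ⟪v i - v j, v i - v j⟫ ≤
      ∑ i, ∑ j, ⟪v i - v j, (Wv i - α • g i) - (Wv j - α • g j)⟫ := by
    refine Finset.sum_le_sum fun i _ => Finset.sum_le_sum fun j _ => ?_
    have h1 := prox_mono hα hh (hfix i) (hfix j)
    rw [hWx, hWx] at h1
    have e1 : xstar i - xstar j = v i - v j := by simp [hv]
    have e2 : Wv i + m - α • f' i (xstar i) - (Wv j + m - α • f' j (xstar j))
        = (Wv i - α • g i) - (Wv j - α • g j) := by simp only [hg]; abel
    rwa [e1, e2] at h1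
  rw [sum_pair v v hv0, sum_pair v _ hv0] at hpair
  have hmain := le_of_mul_le_mul_left hpair (by positivity)
  have hW : √(∑ i, ‖Wv i‖ ^ 2) ≤ β * √(∑ i, ‖v i‖ ^ 2) := by
    rw [← Real.sqrt_sq hβ0, ← Real.sqrt_mul (sq_nonneg β)]
    apply Real.sqrt_le_sqrt
    simp only [EuclideanSpace.real_norm_sq_eq]
    rw [Finset.sum_comm, Finset.sum_comm (f := fun i k => v i k ^ 2), Finset.mul_sum]
    refine Finset.sum_le_sum fun k _ => ?_
    have h0 : ∑ i, v i k = 0 := by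
      have := congrArg (fun z : EuclideanSpace ℝ (Fin d) => z k) hv0
      simpa using this
    have h1 := hWspec (fun i => v i k) h0
    rw [← Real.sqrt_sq hβ0, ← Real.sqrt_mul (sq_nonneg β),
      Real.sqrt_le_sqrt_iff (by positivity)] at h1
    have h2 : ∀ i, Wv i k = ∑ j, W i j * v j k := by
      intro i
      simp [hWv]
    simpa only [h2] using h1
  have hs1 := sum_inner_le v Wv
  have hs2 := sum_inner_le v (fun i => - g i)
  simp only [norm_neg] at hs2
  have hsplit : ∑ i, ⟪v i, Wv i - α • g i⟫ = ∑ i, ⟪v i, Wv i⟫ + α * ∑ i, ⟪v i, - g i⟫ := by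
    rw [Finset.mul_sum, ← Finset.sum_add_distrib]
    refine Finset.sum_congr rfl fun i _ => ?_
    rw [inner_sub_right, inner_smul_right, inner_neg_right]
    ring
  rw [hsplit] at hmain
  simp only [real_inner_self_eq_norm_sq] at hmain
  change √(∑ i, ‖v i‖ ^ 2) ≤ α / (1 - β) * √(∑ i, ‖g i‖ ^ 2)
  have hsq : √(∑ i, ‖v i‖ ^ 2) ^ 2 = ∑ i, ‖v i‖ ^ 2 := Real.sq_sqrt (by positivity)
  rw [← hsq] at hmain
  have hD0 := Real.sqrt_nonneg (∑ i, ‖v i‖ ^ 2)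
  have hG0 := Real.sqrt_nonneg (∑ i, ‖g i‖ ^ 2)
  set D := √(∑ i, ‖v i‖ ^ 2)
  set G := √(∑ i, ‖g i‖ ^ 2)
  have h1 := mul_le_mul_of_nonneg_left hW hD0
  have h2 := mul_le_mul_of_nonneg_left hs2 hα.le
  rw [div_mul_eq_mul_div, le_div_iff₀ (by linarith)]
  rcases hD0.eq_or_lt with h0 | hpos
  · rw [← h0, zero_mul]; positivity
  · refine le_of_mul_le_mul_left ?_ hpos
    nlinarith
end

section
/- In the setting where each f_i : ℝ^d → ℝ is convex with L_i-Lipschitz gradient, L = max_i L_i, the h_i are all equal to a single proper, closed, convex h, W is symmetric nonnegative stochastic with ‖Wv‖ ≤ β‖v‖ for all v ⟂ 𝟙 (β ∈ [0,1)), α > 0, and the consensus problem min_z Σ_i (f_i(z) + h(z)) has optimal value F_opt: if x* both minimizes x ↦ F(x) + (1/(2α))⟨x,(I − 𝐖)x⟩ (so that F(x*) ≤ F_opt) and satisfies the fixed-point equations x*_i = prox_{αh}(Σ_j w_{ij}x*_j − α∇f_i(x*_i)) for all i, then F(𝐱̄*) ≤ F_opt + ( α/(1−β) + Lα²/(2(1−β)²)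 )·‖g*‖², where F(x) = Σ_i (f_i(x_i) + h(x_i)), g* = (∇f_1(x*_1),…,∇f_n(x*_n)), x̄* = (1/n)Σ_i x*_i, and 𝐱̄* = (x̄*,…,x̄*). -/
open scoped RealInnerProductSpace

theorem aux_descent {d : ℕ} (f : EuclideanSpace ℝ (Fin d) → ℝ)
    (f' : EuclideanSpace ℝ (Fin d) → EuclideanSpace ℝ (Fin d))
    (hgrad : ∀ x, HasGradientAt f (f' x) x) (L : ℝ)
    (hlip : ∀ x y, ‖f' x - f' y‖ ≤ L * ‖x - y‖) (x v : EuclideanSpace ℝ (Fin d)) :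
    f (x + v) ≤ f x + ⟪f' x, v⟫ + L / 2 * ‖v‖ ^ 2 := by
  have hd : ∀ t : ℝ, HasDerivAt (fun t : ℝ => f (x + t • v) - t * ⟪f' x, v⟫ - L / 2 * ‖v‖ ^ 2 * t ^ 2)
      (⟪f' (x + t • v), v⟫ - ⟪f' x, v⟫ - L / 2 * ‖v‖ ^ 2 * (2 * t)) t := by
    intro t
    have h1 : HasDerivAt (fun t : ℝ => x + t • v) v t := by
      simpa using ((hasDerivAt_id t).smul_const v).const_add x
    have h2 : HasDerivAt (fun t : ℝ => f (x + t • v)) ⟪f' (x + t • v), v⟫ t := by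
      have := (hgrad (x + t • v)).hasFDerivAt.comp_hasDerivAt t h1
      rw [InnerProductSpace.toDual_apply_apply] at this
      exact this
    have h3 : HasDerivAt (fun t : ℝ => t * ⟪f' x, v⟫) ⟪f' x, v⟫ t := by
      simpa using (hasDerivAt_id t).mul_const ⟪f' x, v⟫
    have h4 : HasDerivAt (fun t : ℝ => L / 2 * ‖v‖ ^ 2 * t ^ 2) (L / 2 * ‖v‖ ^ 2 * (2 * t)) t := by
      simpa using (hasDerivAt_pow 2 t).const_mul (L / 2 * ‖v‖ ^ 2)
    exact (h2.sub h3).sub h4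
  have hanti : AntitoneOn (fun t : ℝ => f (x + t • v) - t * ⟪f' x, v⟫ - L / 2 * ‖v‖ ^ 2 * t ^ 2)
      (Set.Icc 0 1) := by
    apply antitoneOn_of_deriv_nonpos (convex_Icc 0 1)
    · exact fun t _ => (hd t).continuousAt.continuousWithinAt
    · exact fun t _ => (hd t).differentiableAt.differentiableWithinAt
    · intro t ht
      rw [interior_Icc] at ht
      rw [(hd t).deriv, ← inner_sub_left]
      have h1 := real_inner_le_norm (f' (x + t • v) - f' x) v
      have h2 := hlip (x + t • v) x
      rw [add_sub_cancel_left, norm_smul, Real.norm_of_nonneg ht.1.le] at h2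
      have h3 := mul_le_mul_of_nonneg_right h2 (norm_nonneg v)
      nlinarith
  have := hanti (Set.left_mem_Icc.2 zero_le_one) (Set.right_mem_Icc.2 zero_le_one) zero_le_one
  simp at this
  linarith

theorem aux_cs {n d : ℕ} (a b : Fin n → EuclideanSpace ℝ (Fin d)) :
    |∑ i, ⟪a i, b i⟫| ≤ √(∑ i, ‖a i‖ ^ 2) * √(∑ i, ‖b i‖ ^ 2) := by
  refine (Finset.abs_sum_le_sum_abs _ _).trans ?_
  refine (Finset.sum_le_sum fun i _ => abs_real_inner_le_norm (a i) (b i)).trans ?_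
  exact Real.sum_mul_le_sqrt_mul_sqrt _ _ _

theorem aux_spec {n d : ℕ} (W : Fin n → Fin n → ℝ) (β : ℝ) (hβ0 : 0 ≤ β)
    (hWspec : ∀ v : Fin n → ℝ, (∑ i, v i) = 0 →
      Real.sqrt (∑ i, (∑ j, W i j * v j) ^ 2) ≤ β * Real.sqrt (∑ i, v i ^ 2))
    (e : Fin n → EuclideanSpace ℝ (Fin d)) (he : ∑ i, e i = 0) :
    (1 - β) * ∑ i, ‖e i‖ ^ 2 ≤ ∑ i, ⟪e i, e i - ∑ j, W i j • e j⟫ := by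
  have h1 : ∑ i, ‖∑ j, W i j • e j‖ ^ 2 ≤ β ^ 2 * ∑ i, ‖e i‖ ^ 2 := by
    simp only [EuclideanSpace.real_norm_sq_eq]
    rw [Finset.sum_comm, Finset.sum_comm (f := fun i k => (e i) k ^ 2), Finset.mul_sum]
    refine Finset.sum_le_sum fun k _ => ?_
    have h0 : ∑ i, (e i) k = 0 := by
      have := congrArg (fun z : EuclideanSpace ℝ (Fin d) => z k) he
      simpa using this
    have h := hWspec (fun i => e i k) h0
    have h2 := pow_le_pow_left₀ (Real.sqrt_nonneg _) h 2
    rw [mul_pow, Real.sq_sqrt (Finset.sum_nonneg fun i _ => sq_nonneg _),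
      Real.sq_sqrt (Finset.sum_nonneg fun i _ => sq_nonneg _)] at h2
    simpa using h2
  have hE : 0 ≤ ∑ i, ‖e i‖ ^ 2 := Finset.sum_nonneg fun i _ => sq_nonneg _
  have h2 := (le_abs_self _).trans (aux_cs e (fun i => ∑ j, W i j • e j))
  have h3 : √(∑ i, ‖∑ j, W i j • e j‖ ^ 2) ≤ β * √(∑ i, ‖e i‖ ^ 2) := by
    refine (Real.sqrt_le_sqrt h1).trans ?_
    rw [Real.sqrt_mul (sq_nonneg _), Real.sqrt_sq hβ0]
  have h4 := mul_le_mul_of_nonneg_left h3 (Real.sqrt_nonneg (∑ i, ‖e i‖ ^ 2))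
  have h5 := Real.mul_self_sqrt hE
  simp only [inner_sub_right, Finset.sum_sub_distrib, real_inner_self_eq_norm_sq]
  nlinarith

theorem aux_conv {d : ℕ} (h : EuclideanSpace ℝ (Fin d) → EReal) (hh : ProperClosedConvex h) :
    ConvexOn ℝ {x | h x ≠ ⊤} (fun x => (h x).toReal) := by
  obtain ⟨-, hbot, -, hc⟩ := hh
  have key : ∀ x y, h x ≠ ⊤ → h y ≠ ⊤ → ∀ a b : ℝ, 0 ≤ a → 0 ≤ b → a + b = 1 →
      h (a • x + b • y) ≤ ((a * (h x).toReal + b * (h y).toReal : ℝ) : EReal) := by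
    intro x y hx hy a b ha hb hab
    obtain rfl : b = 1 - a := by linarith
    have := hc x y a ha (by linarith)
    rw [← EReal.coe_toReal hx (hbot x), ← EReal.coe_toReal hy (hbot y)] at this
    exact_mod_cast this
  refine ⟨?_, ?_⟩
  · intro x hx y hy a b ha hb hab
    exact ((key x y hx hy a b ha hb hab).trans_lt (EReal.coe_lt_top _)).ne
  · intro x hx y hy a b ha hb hab
    have := key x y hx hy a b ha hb hab
    have h2 : h (a • x + b • y) ≠ ⊤ := (this.trans_lt (EReal.coe_lt_top _)).ne
    rw [← EReal.coe_toReal h2 (hbot _)] at this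
    exact_mod_cast this

theorem aux_prox {d : ℕ} (h : EuclideanSpace ℝ (Fin d) → EReal) (hh : ProperClosedConvex h)
    (α : ℝ) (hα : 0 < α) (u p y : EuclideanSpace ℝ (Fin d)) (hp : IsProxPt α h u p)
    (hpt : h p ≠ ⊤) (hyt : h y ≠ ⊤) :
    0 ≤ α * ((h y).toReal - (h p).toReal) + ⟪p - u, y - p⟫ := by
  have hc := aux_conv h hh
  have key : ∀ t : ℝ, 0 < t → t ≤ 1 →
      0 ≤ α * ((h y).toReal - (h p).toReal) + ⟪p - u, y - p⟫ + t / 2 * ‖y - p‖ ^ 2 := by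
    intro t ht ht1
    have hz : h (t • y + (1 - t) • p) ≠ ⊤ :=
      hc.1 hyt hpt ht.le (by linarith) (by ring)
    have h1 := hc.2 hyt hpt ht.le (by linarith : 0 ≤ 1 - t) (by ring)
    have h2 := hp (t • y + (1 - t) • p)
    rw [← EReal.coe_toReal hpt (hh.2.1 p), ← EReal.coe_toReal hz (hh.2.1 _)] at h2
    have h3 : α * (h p).toReal + 1 / 2 * ‖p - u‖ ^ 2 ≤ α * (h (t • y + (1 - t) • p)).toReal
      + 1 / 2 * ‖t • y + (1 - t) • p - u‖ ^ 2 := by exact_mod_cast h2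
    have h4 : t • y + (1 - t) • p - u = (p - u) + t • (y - p) := by module
    rw [h4, norm_add_sq_real, norm_smul, inner_smul_right, mul_pow, Real.norm_eq_abs, sq_abs] at h3
    have h5 := mul_le_mul_of_nonneg_left h1 hα.le
    simp only [smul_eq_mul] at h5
    refine le_of_mul_le_mul_left (a := t) ?_ ht
    nlinarith
  by_contra! hneg
  set c := α * ((h y).toReal - (h p).toReal) + ⟪p - u, y - p⟫
  have hq := sq_nonneg ‖y - p‖
  set q := ‖y - p‖ ^ 2
  have hpos : 0 < q - c := by linarith
  have := key (-c / (q - c)) (by apply div_pos <;> linarith)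
    (by rw [div_le_one hpos]; linarith)
  have h6 : -c / (q - c) * q ≤ -c := by
    rw [div_mul_eq_mul_div, div_le_iff₀ hpos]; nlinarith
  nlinarith

/-- **Lemma 2, eq. (5), identical regularizers.** If `x⋆` both minimizes
the penalized problem and is a fixed point of synchronous Prox-DGD with the single
regularizer `h`, then
`F(𝐱̄⋆) ≤ Fopt + (α/(1−β) + Lα²/(2(1−β)²))·‖g⋆‖²` with `g⋆ = (∇f₁(x⋆₁),…,∇fₙ(x⋆ₙ))`
and `L = maxᵢ Lᵢ`. -/
theorem stmt6 (n d : ℕ) (hn : 0 < n)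
    (f : Fin n → EuclideanSpace ℝ (Fin d) → ℝ)
    (f' : Fin n → EuclideanSpace ℝ (Fin d) → EuclideanSpace ℝ (Fin d))
    (hfconv : ∀ i, ConvexOn ℝ Set.univ (f i))
    (hgrad : ∀ i x, HasGradientAt (f i) (f' i x) x)
    (Li : Fin n → ℝ)
    (hlip : ∀ i x y, ‖f' i x - f' i y‖ ≤ Li i * ‖x - y‖)
    (L : ℝ) (hL : IsGreatest (Set.range Li) L)
    (h : EuclideanSpace ℝ (Fin d) → EReal)
    (hh : ProperClosedConvex h)
    (W : Fin n → Fin n → ℝ)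
    (hWsymm : ∀ i j, W i j = W j i)
    (hWnonneg : ∀ i j, 0 ≤ W i j)
    (hWstoch : ∀ i, ∑ j, W i j = 1)
    (β : ℝ) (hβ0 : 0 ≤ β) (hβ1 : β < 1)
    (hWspec : ∀ v : Fin n → ℝ, (∑ i, v i) = 0 →
      Real.sqrt (∑ i, (∑ j, W i j * v j) ^ 2) ≤ β * Real.sqrt (∑ i, v i ^ 2))
    (α : ℝ) (hα : 0 < α)
    -- the consensus problem has an optimal solution, with (finite) optimal value `Fopt`
    (zstar : EuclideanSpace ℝ (Fin d)) (Fopt : ℝ)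
    (hzopt : ∀ z : EuclideanSpace ℝ (Fin d),
      (∑ i, (((f i zstar : ℝ) : EReal) + h zstar))
        ≤ ∑ i, (((f i z : ℝ) : EReal) + h z))
    (hFopt : (∑ i, (((f i zstar : ℝ) : EReal) + h zstar)) = ((Fopt : ℝ) : EReal))
    (xstar : Fin n → EuclideanSpace ℝ (Fin d))
    -- `x⋆` minimizes the penalized problem (so that `F(x⋆) ≤ Fopt`)
    (hxstar : ∀ x : Fin n → EuclideanSpace ℝ (Fin d),
      (∑ i, (((f i (xstar i) : ℝ) : EReal) + h (xstar i)))
          + ((1 / (2 * α) * ∑ i, ⟪xstar i, xstar i - (∑ j, W i j • xstar j)⟫ : ℝ) : EReal)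
        ≤ (∑ i, (((f i (x i) : ℝ) : EReal) + h (x i)))
          + ((1 / (2 * α) * ∑ i, ⟪x i, x i - (∑ j, W i j • x j)⟫ : ℝ) : EReal))
    -- and `x⋆` satisfies the Prox-DGD fixed-point equations
    (hfix : ∀ i, IsProxPt α h
      ((∑ j, W i j • xstar j) - α • f' i (xstar i)) (xstar i)) :
    (∑ i, (((f i ((n : ℝ)⁻¹ • ∑ j, xstar j) : ℝ) : EReal) + h ((n : ℝ)⁻¹ • ∑ j, xstar j)))
      ≤ ((Fopt : ℝ) : EReal)
        + (((α / (1 - β) + L * α ^ 2 / (2 * (1 - β) ^ 2))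
            * ∑ i, ‖f' i (xstar i)‖ ^ 2 : ℝ) : EReal) := by
  have hn0 : (n : ℝ) ≠ 0 := by positivity
  have hbot := hh.2.1
  have hconv := aux_conv h hh
  set xb : EuclideanSpace ℝ (Fin d) := (n : ℝ)⁻¹ • ∑ j, xstar j with hxb
  -- real-valued form of the sums
  have hcoe : ∀ x : Fin n → EuclideanSpace ℝ (Fin d), (∀ i, h (x i) ≠ ⊤) →
      (∑ i, (((f i (x i) : ℝ) : EReal) + h (x i)))
        = ((∑ i, (f i (x i) + (h (x i)).toReal) : ℝ) : EReal) := by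
    intro x hx
    have h0 : ∀ i, ((f i (x i) : ℝ) : EReal) + h (x i)
        = ((f i (x i) + (h (x i)).toReal : ℝ) : EReal) := by
      intro i
      rw [EReal.coe_add, EReal.coe_toReal (hx i) (hbot _)]
    simp only [h0]
    exact (map_sum (⟨⟨((↑) : ℝ → EReal), EReal.coe_zero⟩, EReal.coe_add⟩ : ℝ →+ EReal) _ _).symm
  have hmem : ∀ x : Fin n → EuclideanSpace ℝ (Fin d),
      (∑ i, (((f i (x i) : ℝ) : EReal) + h (x i))) ≠ ⊤ → ∀ i, h (x i) ≠ ⊤ := by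
    intro x hx i hi
    apply hx
    rw [← Finset.add_sum_erase _ _ (Finset.mem_univ i), hi, EReal.coe_add_top]
    apply EReal.top_add_of_ne_bot
    have hb : ∀ s : Finset (Fin n), (∑ i ∈ s, (((f i (x i) : ℝ) : EReal) + h (x i))) ≠ ⊥ := by
      intro s
      induction s using Finset.induction_on with
      | empty => simp
      | insert a s ha ih =>
        rw [Finset.sum_insert ha]
        rw [Ne, EReal.add_eq_bot_iff, EReal.add_eq_bot_iff]
        simp [hbot, ih]
    exact hb _
  have hpen := hxstar (fun _ => zstar)
  have hz0 : ∀ i, zstar - ∑ j, W i j • zstar = 0 := by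
    intro i
    rw [← Finset.sum_smul, hWstoch, one_smul, sub_self]
  simp only [hz0, inner_zero_right, Finset.sum_const_zero, mul_zero, EReal.coe_zero, add_zero,
    hFopt] at hpen
  have hxt : ∀ i, h (xstar i) ≠ ⊤ := by
    apply hmem
    intro htop
    rw [htop, EReal.top_add_coe] at hpen
    exact absurd hpen (not_le.2 (EReal.coe_lt_top _))
  rw [hcoe xstar hxt] at hpen
  have hpen' : ∑ i, (f i (xstar i) + (h (xstar i)).toReal)
      + 1 / (2 * α) * ∑ i, ⟪xstar i, xstar i - (∑ j, W i j • xstar j)⟫ ≤ Fopt := by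
    exact_mod_cast hpen
  -- Jensen
  have hw1 : ∑ _i : Fin n, (n : ℝ)⁻¹ = 1 := by simp [hn0]
  have hxb' : xb = ∑ i, (n : ℝ)⁻¹ • xstar i := by rw [hxb, Finset.smul_sum]
  have hxbt : h xb ≠ ⊤ := by
    rw [hxb']
    exact hconv.1.sum_mem (fun i _ => by positivity) hw1 (fun i _ => hxt i)
  have hjen : n * (h xb).toReal ≤ ∑ i, (h (xstar i)).toReal := by
    have := hconv.map_sum_le (t := Finset.univ) (w := fun _ => (n : ℝ)⁻¹) (p := xstar)
      (fun i _ => by positivity) hw1 (fun i _ => hxt i)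
    rw [← hxb'] at this
    simp only [smul_eq_mul, ← Finset.mul_sum] at this
    rwa [inv_mul_eq_div, le_div_iff₀ (by positivity), mul_comm] at this
  -- deviations
  set e : Fin n → EuclideanSpace ℝ (Fin d) := fun i => xstar i - xb with hedef
  have hsx : ∑ i, xstar i = (n : ℝ) • xb := by rw [hxb, smul_inv_smul₀ hn0]
  have he : ∑ i, e i = 0 := by
    simp only [hedef, Finset.sum_sub_distrib, hsx, Finset.sum_const, Finset.card_univ,
      Fintype.card_fin, ← Nat.cast_smul_eq_nsmul ℝ, sub_self]
  have heW : ∀ i, e i - ∑ j, W i j • e j = xstar i - ∑ j, W i j • xstar j := by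
    intro i
    simp only [hedef, smul_sub, Finset.sum_sub_distrib, ← Finset.sum_smul, hWstoch, one_smul]
    abel
  have hspec := aux_spec W β hβ0 hWspec e he
  have hE : 0 ≤ ∑ i, ‖e i‖ ^ 2 := Finset.sum_nonneg fun i _ => sq_nonneg _
  have hG : 0 ≤ ∑ i, ‖f' i (xstar i)‖ ^ 2 := Finset.sum_nonneg fun i _ => sq_nonneg _
  have hsumW : ∑ i, (xstar i - ∑ j, W i j • xstar j) = 0 := by
    rw [Finset.sum_sub_distrib, Finset.sum_comm, sub_eq_zero]
    refine Finset.sum_congr rfl fun j _ => ?_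
    rw [← Finset.sum_smul]
    simp only [fun i => hWsymm i j, hWstoch, one_smul]
  have hpeneq : ∑ i, ⟪xstar i, xstar i - (∑ j, W i j • xstar j)⟫
      = ∑ i, ⟪e i, e i - ∑ j, W i j • e j⟫ := by
    simp only [heW]
    simp only [hedef, inner_sub_left (𝕜 := ℝ) (xstar _) xb, Finset.sum_sub_distrib]
    have h1 := congrArg (fun z => ⟪xb, z⟫) hsumW
    simp only [inner_sum, inner_zero_right] at h1
    simp only [← Finset.sum_sub_distrib]
    rw [Finset.sum_sub_distrib, h1, sub_zero]
  have hFx : ∑ i, (f i (xstar i) + (h (xstar i)).toReal) ≤ Fopt := by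
    rw [hpeneq] at hpen'
    have h1 : 0 ≤ (1 - β) * ∑ i, ‖e i‖ ^ 2 := mul_nonneg (by linarith) hE
    have h2 : 0 ≤ 1 / (2 * α) * ∑ i, ⟪e i, e i - ∑ j, W i j • e j⟫ :=
      mul_nonneg (by positivity) (h1.trans hspec)
    linarith
  -- bound on the deviation
  have hcs := aux_cs (fun i => f' i (xstar i)) e
  have hvar : ∑ i, ⟪e i, e i - ∑ j, W i j • e j⟫ + α * ∑ i, ⟪f' i (xstar i), e i⟫ ≤ 0 := by
    have h1 : ∀ i, ⟪e i, e i - ∑ j, W i j • e j⟫ + α * ⟪f' i (xstar i), e i⟫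
        ≤ α * ((h xb).toReal - (h (xstar i)).toReal) := by
      intro i
      have h2 := aux_prox h hh α hα _ _ xb (hfix i) (hxt i) hxbt
      have h3 : xstar i - (∑ j, W i j • xstar j - α • f' i (xstar i))
          = (e i - ∑ j, W i j • e j) + α • f' i (xstar i) := by rw [heW]; abel
      have h4 : xb - xstar i = - e i := by simp [hedef]
      rw [h3, h4, inner_neg_right, inner_add_left, real_inner_smul_left,
        real_inner_comm (e i) (e i - _)] at h2
      linarith
    have h2 := Finset.sum_le_sum fun i (_ : i ∈ Finset.univ) => h1 i
    rw [Finset.sum_add_distrib, ← Finset.mul_sum, ← Finset.mul_sum, Finset.sum_sub_distrib,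
      Finset.sum_const, Finset.card_univ, Fintype.card_fin, nsmul_eq_mul] at h2
    have h3 : α * (n * (h xb).toReal - ∑ i, (h (xstar i)).toReal) ≤ 0 :=
      mul_nonpos_of_nonneg_of_nonpos hα.le (by linarith)
    linarith
  have hE2 := Real.sq_sqrt hE
  have hG2 := Real.sq_sqrt hG
  have hEs := Real.sqrt_nonneg (∑ i, ‖e i‖ ^ 2)
  have hGs := Real.sqrt_nonneg (∑ i, ‖f' i (xstar i)‖ ^ 2)
  have hdesc : ∑ i, f i xb ≤ ∑ i, f i (xstar i) - ∑ i, ⟪f' i (xstar i), e i⟫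
      + L / 2 * ∑ i, ‖e i‖ ^ 2 := by
    rw [Finset.mul_sum, ← Finset.sum_sub_distrib, ← Finset.sum_add_distrib]
    refine Finset.sum_le_sum fun i _ => ?_
    have h1 := aux_descent (f i) (f' i) (hgrad i) (Li i) (hlip i) (xstar i) (-e i)
    have h2 : xstar i + -e i = xb := by simp [hedef]
    rw [h2, inner_neg_right, norm_neg] at h1
    have h3 : Li i ≤ L := hL.2 ⟨i, rfl⟩
    have h4 := mul_le_mul_of_nonneg_right h3 (sq_nonneg ‖e i‖)
    linarith
  have hLL : 0 ≤ L ∨ ∑ i, ‖e i‖ ^ 2 = 0 := by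
    obtain ⟨⟨i0, hi0⟩, -⟩ := hL
    by_cases hL0 : 0 ≤ L
    · exact Or.inl hL0
    · right
      refine Finset.sum_eq_zero fun i _ => ?_
      have h1 := (norm_nonneg _).trans (hlip i0 (e i) 0)
      rw [hi0, sub_zero] at h1
      have h2 : ‖e i‖ = 0 := by
        by_contra hne
        have : 0 < ‖e i‖ := lt_of_le_of_ne (norm_nonneg _) (Ne.symm hne)
        nlinarith
      rw [h2]; simp
  have hLL' : 0 ≤ L ∨ ∑ i, ‖f' i (xstar i)‖ ^ 2 = 0 := by
    obtain ⟨⟨i0, hi0⟩, -⟩ := hL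
    by_cases hL0 : 0 ≤ L
    · exact Or.inl hL0
    · right
      refine Finset.sum_eq_zero fun i _ => ?_
      have h1 := (norm_nonneg _).trans (hlip i0 (f' i (xstar i)) 0)
      rw [hi0, sub_zero] at h1
      have h2 : ‖f' i (xstar i)‖ = 0 := by
        by_contra hne
        have : 0 < ‖f' i (xstar i)‖ := lt_of_le_of_ne (norm_nonneg _) (Ne.symm hne)
        nlinarith
      rw [h2]; simp
  rw [hcoe (fun _ => xb) (fun _ => hxbt), ← EReal.coe_add, EReal.coe_le_coe_iff]
  rw [Finset.sum_add_distrib] at hFx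
  rw [Finset.sum_add_distrib, Finset.sum_const, Finset.card_univ, Fintype.card_fin, nsmul_eq_mul]
  set I := ∑ i, ⟪f' i (xstar i), e i⟫
  set E := ∑ i, ‖e i‖ ^ 2
  set G := ∑ i, ‖f' i (xstar i)‖ ^ 2
  have hb : 0 < 1 - β := by linarith
  have hI := (abs_le.1 hcs).1
  have hdev : √E ≤ α / (1 - β) * √G := by
    rcases hEs.eq_or_lt with h0 | h0
    · rw [← h0]; positivity
    · rw [div_mul_eq_mul_div, le_div_iff₀ hb]
      refine le_of_mul_le_mul_left (a := √E) ?_ h0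
      nlinarith [mul_le_mul_of_nonneg_left hI hα.le]
  have hT1 : √G * √E ≤ α / (1 - β) * G := by
    have := mul_le_mul_of_nonneg_left hdev hGs
    refine this.trans (le_of_eq ?_)
    rw [← hG2, Real.sqrt_sq hGs]
    ring
  have hT2 : L / 2 * E ≤ L * α ^ 2 / (2 * (1 - β) ^ 2) * G := by
    rcases hLL with h0 | h0
    · have h1 := pow_le_pow_left₀ hEs hdev 2
      rw [mul_pow, hE2, hG2] at h1
      have h2 := mul_le_mul_of_nonneg_left h1 (by positivity : 0 ≤ L / 2)
      refine h2.trans (le_of_eq ?_)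
      field_simp
    · rcases hLL' with h1 | h1
      · rw [h0, mul_zero]; positivity
      · rw [h0, h1]; simp
  rw [add_mul]
  linarith
end

section
/- (Lemma 3, existence part.) Let each f_i : ℝ^d → ℝ be convex with L_i-Lipschitz gradient and bounded below, suppose the optimal solution set of min_{z∈ℝ^d} Σ_i f_i(z) is nonempty and bounded, and let W ∈ ℝ^{n×n} be symmetric, entrywise nonnegative, stochastic, and positive definite, with ‖Wv‖ ≤ β‖v‖ for all v ⟂ 𝟙 and β ∈ [0,1). Then for every α > 0 the DGD-ATC map T(x) = 𝐖(x − α∇f(x)) has a fixed point; equivalently, the function x ↦ Σ_i f_i(x_i) + (1/(2α))⟨x, (𝐖^{-1} − I)x⟩ attains its minimum over (ℝ^d)^n. -/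
open scoped RealInnerProductSpace

lemma exists_min_of_no_recession {E : Type*} [NormedAddCommGroup E] [NormedSpace ℝ E]
    [FiniteDimensional ℝ E] (F : E → ℝ) (hc : Continuous F) (hF : ConvexOn ℝ Set.univ F) (x0 : E)
    (h : ∀ u : E, ‖u‖ = 1 → (∀ t : ℝ, 0 < t → F (x0 + t • u) ≤ F x0) → False) :
    ∃ x, ∀ y, F x ≤ F y := by
  have : ProperSpace E := FiniteDimensional.proper ℝ E
  -- scaling
  have key : ∀ (u : E) (s t : ℝ), 0 < s → s ≤ t → F (x0 + t • u) ≤ F x0 →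
      F (x0 + s • u) ≤ F x0 := by
    intro u s t hs hst ht
    have htp : 0 < t := hs.trans_le hst
    have ha : 0 ≤ 1 - s / t := by rw [sub_nonneg]; exact (div_le_one htp).2 hst
    have hb : 0 ≤ s / t := by positivity
    have h1 := hF.2 (Set.mem_univ x0) (Set.mem_univ (x0 + t • u)) ha hb (by ring)
    have e : (1 - s / t) • x0 + (s / t) • (x0 + t • u) = x0 + s • u := by
      rw [smul_add, smul_smul, div_mul_cancel₀ _ htp.ne', sub_smul, one_smul]; abel
    rw [e] at h1
    simp only [smul_eq_mul] at h1
    have : 0 ≤ s / t := by positivity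
    nlinarith
  let K : ℕ → Set E := fun k => Metric.sphere (0 : E) 1 ∩ {u | F (x0 + ((k : ℝ) + 1) • u) ≤ F x0}
  have hKcl : ∀ k, IsClosed {u : E | F (x0 + ((k : ℝ) + 1) • u) ≤ F x0} := fun k =>
    isClosed_le (hc.comp (by fun_prop)) continuous_const
  by_cases hne : ∀ k, (K k).Nonempty
  · exfalso
    obtain ⟨u, hu⟩ := IsCompact.nonempty_iInter_of_sequence_nonempty_isCompact_isClosed K
      (by
        rintro k u ⟨hu1, hu2⟩
        refine ⟨hu1, ?_⟩
        refine key u _ ((↑(k+1) : ℝ) + 1) (by positivity) (by push_cast; linarith) hu2)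
      hne (IsCompact.inter_right (isCompact_sphere _ _) (by exact_mod_cast hKcl 0))
      (fun k => Metric.isClosed_sphere.inter (hKcl k))
    rw [Set.mem_iInter] at hu
    refine h u (by simpa using (hu 0).1) fun t ht => ?_
    obtain ⟨k, hk⟩ := exists_nat_ge t
    exact key u t ((k : ℝ) + 1) ht (by linarith) (hu k).2
  · push Not at hne
    obtain ⟨k, hk⟩ := hne
    obtain ⟨x, hx, hmin⟩ := (isCompact_closedBall x0 ((k : ℝ) + 1)).exists_isMinOn
      ⟨x0, by simp; positivity⟩ hc.continuousOn
    refine ⟨x, fun y => ?_⟩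
    by_cases hy : y ∈ Metric.closedBall x0 ((k : ℝ) + 1)
    · exact hmin hy
    · have h0 : F x ≤ F x0 := hmin (by simp; positivity)
      by_contra hlt
      push Not at hlt
      rw [Metric.mem_closedBall, dist_eq_norm, not_le] at hy
      have hk0 : (0 : ℝ) < (k : ℝ) + 1 := by positivity
      have hpos : 0 < ‖y - x0‖ := hk0.trans hy
      have hm : (‖y - x0‖⁻¹ • (y - x0)) ∈ K k := by
        refine ⟨?_, ?_⟩
        · simp [norm_smul, hpos.ne']
        · refine key _ _ ‖y - x0‖ hk0 hy.le ?_
          rw [smul_smul, mul_inv_cancel₀ hpos.ne', one_smul, add_sub_cancel]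
          linarith
      rw [hk] at hm
      exact hm

/-- The bilinear form. -/
noncomputable def bform {n d : ℕ} (M : Matrix (Fin n) (Fin n) ℝ)
    (x y : Fin n → EuclideanSpace ℝ (Fin d)) : ℝ := ∑ i, ⟪x i, ∑ j, M i j • y j⟫

section
variable {n d : ℕ} (M : Matrix (Fin n) (Fin n) ℝ)

lemma bform_add_left (x y z : Fin n → EuclideanSpace ℝ (Fin d)) :
    bform M (x + y) z = bform M x z + bform M y z := by
  simp [bform, inner_add_left, Finset.sum_add_distrib]
lemma bform_add_right (x y z : Fin n → EuclideanSpace ℝ (Fin d)) :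
    bform M x (y + z) = bform M x y + bform M x z := by
  simp [bform, inner_add_right, Finset.sum_add_distrib]
lemma bform_smul_left (a : ℝ) (x z : Fin n → EuclideanSpace ℝ (Fin d)) :
    bform M (a • x) z = a * bform M x z := by
  simp [bform, inner_smul_left, Finset.mul_sum]
lemma bform_smul_right (a : ℝ) (x z : Fin n → EuclideanSpace ℝ (Fin d)) :
    bform M x (a • z) = a * bform M x z := by
  simp only [bform, Finset.mul_sum, Pi.smul_apply, inner_sum, inner_smul_right]
  exact Finset.sum_congr rfl fun i _ => Finset.sum_congr rfl fun j _ => by ring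
lemma bform_sub_self (x y : Fin n → EuclideanSpace ℝ (Fin d)) :
    bform M (x - y) (x - y) = bform M x x - bform M x y - bform M y x + bform M y y := by
  have : x - y = x + (-1 : ℝ) • y := by simp [sub_eq_add_neg]
  rw [this]
  simp only [bform_add_left, bform_add_right, bform_smul_left, bform_smul_right]
  ring
lemma bform_symm (hM : M.IsSymm) (x y : Fin n → EuclideanSpace ℝ (Fin d)) :
    bform M x y = bform M y x := by
  simp only [bform, inner_sum, inner_smul_right]
  rw [Finset.sum_comm]
  refine Finset.sum_congr rfl fun i _ => Finset.sum_congr rfl fun j _ => ?_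
  rw [real_inner_comm, hM.apply i j]
lemma bform_coord (x : Fin n → EuclideanSpace ℝ (Fin d)) :
    bform M x x = ∑ c, (fun i => x i c) ⬝ᵥ (M.mulVec (fun i => x i c)) := by
  simp only [bform, PiLp.inner_apply, dotProduct, Matrix.mulVec]
  rw [Finset.sum_comm]
  refine Finset.sum_congr rfl fun i _ => Finset.sum_congr rfl fun j _ => ?_
  simp [mul_comm]
lemma bform_convex (h : ∀ x : Fin n → EuclideanSpace ℝ (Fin d), 0 ≤ bform M x x) :
    ConvexOn ℝ Set.univ (fun x : Fin n → EuclideanSpace ℝ (Fin d) => bform M x x) := by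
  refine ⟨convex_univ, fun x _ y _ a b ha hb hab => ?_⟩
  simp only [bform_add_left, bform_add_right, bform_smul_left, bform_smul_right, smul_eq_mul]
  have h1 := h (x - y)
  rw [bform_sub_self] at h1
  have hb' : b = 1 - a := by linarith
  have h2 := mul_nonneg (mul_nonneg ha hb) h1
  subst hb'
  nlinarith
end

section
variable {n : ℕ} (W : Matrix (Fin n) (Fin n) ℝ)

lemma one_sub_psd (hWsymm : W.IsSymm)
    (hWnonneg : ∀ i j, 0 ≤ W i j)
    (hWstoch : ∀ i, ∑ j, W i j = 1) (v : Fin n → ℝ) :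
    0 ≤ v ⬝ᵥ (v - W.mulVec v) := by
  rw [dotProduct_sub]
  have h1 : v ⬝ᵥ W.mulVec v = ∑ i, ∑ j, W i j * (v i * v j) := by
    simp only [dotProduct, Matrix.mulVec, Finset.mul_sum]
    exact Finset.sum_congr rfl fun i _ => Finset.sum_congr rfl fun j _ => by ring
  have h2 : v ⬝ᵥ v = ∑ i, ∑ j, W i j * (v i * v i) := by
    simp only [← Finset.sum_mul, hWstoch, one_mul, dotProduct]
  have h3 : v ⬝ᵥ v = ∑ i, ∑ j, W i j * (v j * v j) := by
    rw [h2, Finset.sum_comm]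
    exact Finset.sum_congr rfl fun i _ => Finset.sum_congr rfl fun j _ => by rw [hWsymm.apply]
  have h4 : 2 * (v ⬝ᵥ W.mulVec v) ≤ v ⬝ᵥ v + v ⬝ᵥ v := by
    nth_rw 1 [h2]
    rw [h3, h1, Finset.mul_sum, ← Finset.sum_add_distrib]
    refine Finset.sum_le_sum fun i _ => ?_
    rw [Finset.mul_sum, ← Finset.sum_add_distrib]
    refine Finset.sum_le_sum fun j _ => ?_
    nlinarith [mul_nonneg (hWnonneg i j) (sq_nonneg (v i - v j))]
  linarith

lemma M_form (hWsymm : W.IsSymm) (hWpd : W.PosDef) (v : Fin n → ℝ) :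
    v ⬝ᵥ ((W⁻¹ - 1).mulVec v) = v ⬝ᵥ (v - W.mulVec v) +
      ((W⁻¹ - 1).mulVec v) ⬝ᵥ (W.mulVec ((W⁻¹ - 1).mulVec v)) := by
  have hdet : IsUnit W.det := hWpd.det_pos.ne'.isUnit
  have e : W.mulVec ((W⁻¹ - 1).mulVec v) = v - W.mulVec v := by
    rw [Matrix.mulVec_mulVec, mul_sub, Matrix.mul_nonsing_inv _ hdet, Matrix.sub_mulVec]; simp
  rw [e, ← add_dotProduct]
  have e2 : v + (W⁻¹ - 1).mulVec v = W⁻¹.mulVec v := by simp [Matrix.sub_mulVec]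
  rw [e2, dotProduct_sub, Matrix.dotProduct_mulVec (W⁻¹.mulVec v), ← Matrix.mulVec_transpose,
    hWsymm.eq, Matrix.mulVec_mulVec, Matrix.mul_nonsing_inv _ hdet, Matrix.sub_mulVec,
    dotProduct_sub, dotProduct_comm v]
  simp

lemma M_nonneg (hWsymm : W.IsSymm)
    (hWnonneg : ∀ i j, 0 ≤ W i j)
    (hWstoch : ∀ i, ∑ j, W i j = 1) (hWpd : W.PosDef) (v : Fin n → ℝ) :
    0 ≤ v ⬝ᵥ ((W⁻¹ - 1).mulVec v) := by
  rw [M_form W hWsymm hWpd]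
  have := hWpd.posSemidef.dotProduct_mulVec_nonneg ((W⁻¹ - 1).mulVec v)
  exact add_nonneg (one_sub_psd W hWsymm hWnonneg hWstoch v) (by simpa using this)

lemma M_zero (hn : 0 < n) (hWsymm : W.IsSymm)
    (hWnonneg : ∀ i j, 0 ≤ W i j)
    (hWstoch : ∀ i, ∑ j, W i j = 1) (hWpd : W.PosDef)
    (β : ℝ) (hβ1 : β < 1)
    (hWspec : ∀ v : Fin n → ℝ, (∑ i, v i) = 0 →
      Real.sqrt (∑ i, (∑ j, W i j * v j) ^ 2) ≤ β * Real.sqrt (∑ i, v i ^ 2))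
    (v : Fin n → ℝ) (h : v ⬝ᵥ ((W⁻¹ - 1).mulVec v) = 0) : ∀ i j, v i = v j := by
  have hdet : IsUnit W.det := hWpd.det_pos.ne'.isUnit
  rw [M_form W hWsymm hWpd] at h
  have h1 := one_sub_psd W hWsymm hWnonneg hWstoch v
  have hz : (W⁻¹ - 1).mulVec v = 0 := by
    by_contra hne
    have := hWpd.dotProduct_mulVec_pos hne
    simp only [star_trivial] at this
    linarith
  have e : W.mulVec ((W⁻¹ - 1).mulVec v) = v - W.mulVec v := by
    rw [Matrix.mulVec_mulVec, mul_sub, Matrix.mul_nonsing_inv _ hdet, Matrix.sub_mulVec]; simp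
  rw [hz, Matrix.mulVec_zero] at e
  have hW : ∀ i, ∑ j, W i j * v j = v i := fun i => by
    have := congrFun e i
    simp [Matrix.mulVec, dotProduct] at this
    linarith
  set m : ℝ := (∑ i, v i) / n with hm
  have hn' : (n : ℝ) ≠ 0 := by positivity
  have hs := hWspec (fun i => v i - m) (by simp [Finset.sum_sub_distrib, hm]; field_simp; simp)
  have hW' : ∀ i, ∑ j, W i j * (v j - m) = v i - m := fun i => by
    simp only [mul_sub, Finset.sum_sub_distrib, hW, ← Finset.sum_mul, hWstoch, one_mul]
  simp only [hW'] at hs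
  have h0 : Real.sqrt (∑ i, (v i - m) ^ 2) = 0 := by
    have := Real.sqrt_nonneg (∑ i, (v i - m) ^ 2)
    nlinarith
  have hnn : 0 ≤ ∑ i, (v i - m) ^ 2 := Finset.sum_nonneg fun i _ => sq_nonneg _
  rw [Real.sqrt_eq_zero hnn, Finset.sum_eq_zero_iff_of_nonneg (fun i _ => sq_nonneg _)] at h0
  have h0' : ∀ i, v i = m := fun i => by
    have := h0 i (Finset.mem_univ _)
    have := pow_eq_zero_iff (two_ne_zero) |>.1 this
    linarith
  intro i j
  rw [h0', h0' j]

lemma M_rowsum (hWstoch : ∀ i, ∑ j, W i j = 1) (hWpd : W.PosDef) (i : Fin n) :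
    ∑ j, (W⁻¹ - 1) i j = 0 := by
  have hdet : IsUnit W.det := hWpd.det_pos.ne'.isUnit
  have h1 : W.mulVec (fun _ => 1) = fun _ => 1 := by
    ext i; simp [Matrix.mulVec, dotProduct, hWstoch]
  have h2 : W⁻¹.mulVec (fun _ => 1) = fun _ => (1 : ℝ) := by
    conv_lhs => rw [← h1]
    rw [Matrix.mulVec_mulVec, Matrix.nonsing_inv_mul _ hdet, Matrix.one_mulVec]
  have h3 : (W⁻¹ - 1).mulVec (fun _ => 1) = 0 := by
    rw [Matrix.sub_mulVec, h2]; simp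
  simpa [Matrix.mulVec, dotProduct] using congrFun h3 i
end

/-- **Lemma 3, existence part.** For convex `Lᵢ`-smooth `fᵢ` bounded
below, a nonempty bounded optimal set of `min_z ∑ᵢ fᵢ(z)`, and `W` symmetric,
nonnegative, stochastic, and positive definite with spectral bound `β ∈ [0,1)` on
`𝟙^⊥`, the DGD-ATC map `T(x) = 𝐖(x − α∇f(x))` has a fixed point for every `α > 0`;
equivalently, `x ↦ ∑ᵢ fᵢ(xᵢ) + (1/(2α))⟨x,(𝐖⁻¹ − I)x⟩` attains its minimum. -/
theorem stmt15 (n d : ℕ) (hn : 0 < n)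
    (W : Matrix (Fin n) (Fin n) ℝ)
    (hWsymm : W.IsSymm)
    (hWnonneg : ∀ i j, 0 ≤ W i j)
    (hWstoch : ∀ i, ∑ j, W i j = 1)
    (hWpd : W.PosDef)
    (β : ℝ) (hβ0 : 0 ≤ β) (hβ1 : β < 1)
    (hWspec : ∀ v : Fin n → ℝ, (∑ i, v i) = 0 →
      Real.sqrt (∑ i, (∑ j, W i j * v j) ^ 2) ≤ β * Real.sqrt (∑ i, v i ^ 2))
    (f : Fin n → EuclideanSpace ℝ (Fin d) → ℝ)
    (f' : Fin n → EuclideanSpace ℝ (Fin d) → EuclideanSpace ℝ (Fin d))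
    (hgrad : ∀ i x, HasGradientAt (f i) (f' i x) x)
    (hfconv : ∀ i, ConvexOn ℝ Set.univ (f i))
    (L : Fin n → ℝ)
    (hlip : ∀ i x y, ‖f' i x - f' i y‖ ≤ L i * ‖x - y‖)
    (hfbdd : ∀ i, BddBelow (Set.range (f i)))
    -- the optimal solution set of the consensus problem is nonempty and bounded
    (hopt_ne : {z : EuclideanSpace ℝ (Fin d) |
      ∀ y, (∑ i, f i z) ≤ ∑ i, f i y}.Nonempty)
    (hopt_bdd : Bornology.IsBounded {z : EuclideanSpace ℝ (Fin d) |
      ∀ y, (∑ i, f i z) ≤ ∑ i, f i y}) :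
    ∀ α : ℝ, 0 < α →
      (∃ xstar : Fin n → EuclideanSpace ℝ (Fin d),
        ∀ i, xstar i = ∑ j, W i j • (xstar j - α • f' j (xstar j))) ∧
      (∃ x₀ : Fin n → EuclideanSpace ℝ (Fin d),
        ∀ x : Fin n → EuclideanSpace ℝ (Fin d),
          (∑ i, f i (x₀ i)) + 1 / (2 * α) * ∑ i, ⟪x₀ i, ∑ j, (W⁻¹ - 1) i j • x₀ j⟫
            ≤ (∑ i, f i (x i)) + 1 / (2 * α) * ∑ i, ⟪x i, ∑ j, (W⁻¹ - 1) i j • x j⟫) := by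
  intro α hα
  have hdet : IsUnit W.det := hWpd.det_pos.ne'.isUnit
  set M : Matrix (Fin n) (Fin n) ℝ := W⁻¹ - 1 with hM
  have hMsymm : M.IsSymm := by
    rw [hM, Matrix.IsSymm, Matrix.transpose_sub, Matrix.transpose_nonsing_inv, hWsymm.eq,
      Matrix.transpose_one]
  have hBnn : ∀ x : Fin n → EuclideanSpace ℝ (Fin d), 0 ≤ bform M x x := fun x => by
    rw [bform_coord]
    exact Finset.sum_nonneg fun c _ => M_nonneg W hWsymm hWnonneg hWstoch hWpd _
  have hB0 : ∀ x : Fin n → EuclideanSpace ℝ (Fin d), bform M x x = 0 → ∀ i j, x i = x j := by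
    intro x hx i j
    rw [bform_coord, Finset.sum_eq_zero_iff_of_nonneg
      (fun c _ => M_nonneg W hWsymm hWnonneg hWstoch hWpd _)] at hx
    ext c
    exact M_zero W hn hWsymm hWnonneg hWstoch hWpd β hβ1 hWspec _ (hx c (Finset.mem_univ _)) i j
  have hBc : ∀ (x : Fin n → EuclideanSpace ℝ (Fin d)) (z : EuclideanSpace ℝ (Fin d)),
      bform M x (fun _ => z) = 0 := by
    intro x z
    simp only [bform, ← Finset.sum_smul]
    refine Finset.sum_eq_zero fun i _ => ?_
    rw [hM, M_rowsum W hWstoch hWpd, zero_smul, inner_zero_right]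
  have hfcont : ∀ i, Continuous (f i) := fun i =>
    continuous_iff_continuousAt.2 fun x => (hgrad i x).continuousAt
  let F : (Fin n → EuclideanSpace ℝ (Fin d)) → ℝ := fun x =>
    (∑ i, f i (x i)) + 1 / (2 * α) * bform M x x
  have hFc : Continuous F := by
    have : Continuous fun x : Fin n → EuclideanSpace ℝ (Fin d) => bform M x x := by
      unfold bform; fun_prop
    exact (continuous_finsetSum _ fun i _ => (hfcont i).comp (continuous_apply i)).add
      (continuous_const.mul this)
  have hFconv : ConvexOn ℝ Set.univ F := by
    have h1 : ConvexOn ℝ Set.univ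
        (fun x : Fin n → EuclideanSpace ℝ (Fin d) => ∑ i, f i (x i)) := by
      refine ⟨convex_univ, fun x _ y _ a b ha hb hab => ?_⟩
      simp only [smul_eq_mul, Finset.mul_sum, ← Finset.sum_add_distrib]
      exact Finset.sum_le_sum fun i _ => (hfconv i).2 trivial trivial ha hb hab
    exact h1.add ((bform_convex M hBnn).smul (c := 1 / (2 * α)) (by positivity))
  obtain ⟨z, hz⟩ := hopt_ne
  choose m hm using hfbdd
  have hmle : ∀ i y, m i ≤ f i y := fun i y => hm i ⟨y, rfl⟩
  have hexp : ∀ (x u : Fin n → EuclideanSpace ℝ (Fin d)) (t : ℝ),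
      bform M (x + t • u) (x + t • u) = bform M x x + 2 * t * bform M u x
        + t ^ 2 * bform M u u := by
    intro x u t
    simp only [bform_add_left, bform_add_right, bform_smul_left, bform_smul_right]
    rw [bform_symm M hMsymm x u]; ring
  obtain ⟨x₀, hx₀⟩ : ∃ x, ∀ y, F x ≤ F y := by
    refine exists_min_of_no_recession F hFc hFconv (fun _ => z) fun u hu hrec => ?_
    have hF0 : F (fun _ => z) = ∑ i, f i z := by
      simp only [F, hBc, mul_zero, add_zero]
    rw [hF0] at hrec
    have hQ : bform M u u = 0 := by
      by_contra hne
      have hpos : 0 < bform M u u := lt_of_le_of_ne (hBnn u) (Ne.symm hne)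
      have hle : ∑ i, m i ≤ ∑ i, f i z := Finset.sum_le_sum fun i _ => hmle i z
      set c := 1 / (2 * α) * bform M u u with hc
      have hcpos : 0 < c := by positivity
      set D := ∑ i, f i z - ∑ i, m i with hD
      have hD0 : 0 ≤ D := by linarith
      have ht : 0 < D / c + 1 := by positivity
      have h1 := hrec _ ht
      simp only [F] at h1
      rw [hexp, hBc, hBc] at h1
      have h2 : ∑ i, m i ≤ ∑ i, f i (((fun _ => z) + (D / c + 1) • u : Fin n → EuclideanSpace ℝ (Fin d)) i) :=
        Finset.sum_le_sum fun i _ => hmle i _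
      have h3 : (D / c + 1) ^ 2 * c ≤ D := by
        have : 1 / (2 * α) * (0 + 2 * (D / c + 1) * 0 + (D / c + 1) ^ 2 * bform M u u)
          = (D / c + 1) ^ 2 * c := by rw [hc]; ring
        linarith
      have h4 : (D / c) * c = D := div_mul_cancel₀ _ hcpos.ne'
      have h5 : 0 ≤ D / c := by positivity
      nlinarith [mul_nonneg h5 hD0]
    have hcons := hB0 u hQ
    set v := u ⟨0, hn⟩ with hv
    have huv : u = fun _ => v := funext fun i => hcons i _
    have hv0 : v ≠ 0 := by
      intro h0
      rw [huv, h0] at hu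
      have : (fun _ : Fin n => (0 : EuclideanSpace ℝ (Fin d))) = 0 := rfl
      rw [this, norm_zero] at hu
      exact zero_ne_one hu
    have hvn : 0 < ‖v‖ := norm_pos_iff.2 hv0
    obtain ⟨R, hR⟩ := hopt_bdd.exists_norm_le
    have hmem : ∀ t : ℝ, 0 < t → ‖z + t • v‖ ≤ R := by
      intro t ht
      refine hR _ fun y => le_trans ?_ (hz y)
      have h1 := hrec t ht
      simp only [F] at h1
      rw [hexp, hBc, hBc, hQ] at h1
      simpa [hcons _ ⟨0, hn⟩, ← hv] using h1
    have hR0 : 0 ≤ R := (norm_nonneg _).trans (hmem 1 one_pos)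
    have ht : 0 < (R + ‖z‖ + 1) / ‖v‖ := by positivity
    have h1 := hmem _ ht
    have h2 : ‖((R + ‖z‖ + 1) / ‖v‖) • v‖ = R + ‖z‖ + 1 := by
      rw [norm_smul, Real.norm_of_nonneg ht.le, div_mul_cancel₀ _ hvn.ne']
    have h3 := norm_sub_le (z + ((R + ‖z‖ + 1) / ‖v‖) • v) z
    rw [add_sub_cancel_left, h2] at h3
    linarith
  refine ⟨⟨x₀, ?_⟩, x₀, hx₀⟩
  -- stationarity
  let u : Fin n → EuclideanSpace ℝ (Fin d) := fun i =>
    f' i (x₀ i) + (1 / α) • ∑ j, M i j • x₀ j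
  have hder : HasDerivAt (fun t : ℝ => F (x₀ + t • u))
      ((∑ i, ⟪f' i (x₀ i), u i⟫) + 1 / (2 * α) * (2 * bform M u x₀)) 0 := by
    simp only [F, hexp]
    refine HasDerivAt.add (HasDerivAt.fun_sum fun i _ => ?_) (HasDerivAt.const_mul _ ?_)
    · have h1 : HasDerivAt (fun t : ℝ => x₀ i + t • u i) (u i) 0 := by
        simpa using ((hasDerivAt_id (0 : ℝ)).smul_const (u i)).const_add (x₀ i)
      have h2 := (hgrad i (x₀ i)).hasFDerivAt
      rw [show x₀ i = x₀ i + (0 : ℝ) • u i by simp] at h2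
      have h4 := h2.comp_hasDerivAt (0 : ℝ) h1
      simpa [Function.comp_def] using h4
    · have h1 : HasDerivAt (fun t : ℝ => bform M x₀ x₀ + 2 * t * bform M u x₀
          + t ^ 2 * bform M u u) (2 * 1 * bform M u x₀ + (2 * 0 ^ 1 * 1) * bform M u u) 0 := by
        refine HasDerivAt.add (HasDerivAt.const_add _ ?_) ?_
        · exact ((hasDerivAt_id (0 : ℝ)).const_mul 2).mul_const _
        · simpa using ((hasDerivAt_id (0 : ℝ)).pow 2).mul_const (bform M u u)
      simpa using h1
  have hmin : IsLocalMin (fun t : ℝ => F (x₀ + t • u)) 0 :=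
    Filter.Eventually.of_forall fun t => by simpa using hx₀ (x₀ + t • u)
  have h0 := hmin.hasDerivAt_eq_zero hder
  have hsum : ∑ i, ⟪u i, u i⟫ = 0 := by
    rw [← h0, bform]
    have : 1 / (2 * α) * (2 * ∑ i, ⟪u i, ∑ j, M i j • x₀ j⟫)
      = ∑ i, (1 / α) * ⟪u i, ∑ j, M i j • x₀ j⟫ := by
      rw [← Finset.mul_sum]; field_simp
    rw [this, ← Finset.sum_add_distrib]
    refine Finset.sum_congr rfl fun i _ => ?_
    conv_lhs => rw [show u i = f' i (x₀ i) + (1 / α) • ∑ j, M i j • x₀ j from rfl]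
    rw [inner_add_left, inner_smul_left, real_inner_comm (∑ j, M i j • x₀ j) (u i)]
    simp [u]
  rw [Finset.sum_eq_zero_iff_of_nonneg (fun i _ => real_inner_self_nonneg)] at hsum
  have hstat : ∀ j, α • f' j (x₀ j) = - ∑ l, M j l • x₀ l := by
    intro j
    have h1 : u j = 0 := inner_self_eq_zero.1 (hsum j (Finset.mem_univ _))
    have h2 : α • u j = 0 := by rw [h1, smul_zero]
    simp only [u, smul_add, smul_smul, mul_one_div_cancel hα.ne', one_smul] at h2
    exact eq_neg_of_add_eq_zero_left h2
  intro i
  have hWM : W + W * M = 1 := by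
    rw [hM, mul_sub, Matrix.mul_nonsing_inv _ hdet, mul_one]; abel
  have e1 : ∑ j, W i j • (x₀ j - α • f' j (x₀ j)) = ∑ l, (W + W * M) i l • x₀ l := by
    simp only [hstat, sub_neg_eq_add, smul_add, Finset.sum_add_distrib, Matrix.add_apply, add_smul,
      Matrix.mul_apply, Finset.sum_smul, Finset.smul_sum, smul_smul]
    congr 1
    exact Finset.sum_comm
  rw [e1, hWM]
  simp [Matrix.one_apply]
end

section
/- (Theorem 4, total asynchrony for DGD-ATC.) Let W ∈ ℝ^{n×n} be symmetric, entrywise nonnegative, stochastic, and positive definite; let each f_i : ℝ^d → ℝ be μ_i-strongly convex with L_i-Lipschitz gradient; and let 0 < α < 2/max_i L_i. Consider iterates x^k ∈ (ℝ^d)^n, activation sets K_i ⊆ ℕ, and delay indices s_{ij}^k ∈ {0,…,k} with s_{ii}^k = k, satisfying the asynchronous DGD-ATC recursion: for k ∈ K_i, x_i^{k+1} = Σ_j w_{ij}( x_j^{s_{ij}^k} − α∇f_j(x_j^{s_{ij}^k}) ), and x_i^{k+1} = x_i^k for k ∉ K_i. Assume total asynchrony: each K_i is infinite and lim_{k→∞}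 s_{ij}^k = +∞ for all i and j with w_{ij} > 0. Then (x^k) converges to the unique point x* satisfying x*_i = Σ_j w_{ij}( x*_j − α∇f_j(x*_j) ) for all i. -/
open scoped RealInnerProductSpace
open Filter

section helpers
variable {E : Type*} [NormedAddCommGroup E] [InnerProductSpace ℝ E] [CompleteSpace E]

lemma aux_upper (f : E → ℝ) (g : E → E) (hg : ∀ x, HasGradientAt f (g x) x) (c : ℝ)
    (h : ∀ x y, ⟪g x - g y, x - y⟫ ≤ c * ‖x - y‖ ^ 2) (x y : E) :
    f y ≤ f x + ⟪g x, y - x⟫ + c / 2 * ‖y - x‖ ^ 2 := by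
  set v := y - x with hv
  let φ : ℝ → ℝ := fun t => f (x + t • v) - t * ⟪g x, v⟫ - c / 2 * t ^ 2 * ‖v‖ ^ 2
  have hd : ∀ t : ℝ, HasDerivAt φ (⟪g (x + t • v), v⟫ - ⟪g x, v⟫ - c * t * ‖v‖ ^ 2) t := by
    intro t
    have h1 : HasDerivAt (fun t : ℝ => x + t • v) v t := by
      simpa using ((hasDerivAt_id t).smul_const v).const_add x
    have h2 := (hg (x + t • v)).hasFDerivAt.comp_hasDerivAt t h1
    have h3 := (hasDerivAt_id t).mul_const ⟪g x, v⟫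
    have h4 := (((hasDerivAt_id t).pow 2).const_mul (c / 2)).mul_const (‖v‖ ^ 2)
    refine ((h2.sub h3).sub h4).congr_deriv ?_
    simp
    left
    ring
  have hanti : AntitoneOn φ (Set.Icc 0 1) := by
    apply antitoneOn_of_deriv_nonpos (convex_Icc 0 1)
    · exact fun t _ => (hd t).continuousAt.continuousWithinAt
    · exact fun t _ => (hd t).differentiableAt.differentiableWithinAt
    · intro t ht
      rw [interior_Icc] at ht
      rw [(hd t).deriv]
      have := h (x + t • v) x
      rw [add_sub_cancel_left, inner_smul_right, norm_smul, inner_sub_left, mul_pow,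
        Real.norm_eq_abs, sq_abs] at this
      have h0 := ht.1
      have : t * (⟪g (x + t • v), v⟫ - ⟪g x, v⟫ - c * t * ‖v‖ ^ 2) ≤ 0 := by nlinarith
      by_contra hcon
      push Not at hcon
      have := mul_pos h0 hcon
      linarith
  have := hanti (Set.left_mem_Icc.2 zero_le_one) (Set.right_mem_Icc.2 zero_le_one) zero_le_one
  simp only [φ, hv] at this
  simp at this
  linarith

lemma aux_coco (f : E → ℝ) (g : E → E) (hg : ∀ x, HasGradientAt f (g x) x) (L : ℝ) (hL : 0 < L)
    (hm : ∀ x y, 0 ≤ ⟪g x - g y, x - y⟫)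
    (hl : ∀ x y, ‖g x - g y‖ ≤ L * ‖x - y‖) (x y : E) :
    ‖g x - g y‖ ^ 2 ≤ L * ⟪g x - g y, x - y⟫ := by
  have up := aux_upper f g hg L (fun x y => by
    have h1 := real_inner_le_norm (g x - g y) (x - y)
    have h2 := hl x y
    nlinarith [norm_nonneg (x - y)])
  have low := aux_upper (fun x => - f x) (fun x => - g x) (fun x => by
      have := (hg x).hasFDerivAt.neg
      rw [hasGradientAt_iff_hasFDerivAt, map_neg]
      exact this) 0 (fun x y => by
    have := hm x y
    rw [← neg_sub', inner_neg_left]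
    simpa using this)
  have key : ∀ x y, ‖g x - g y‖ ^ 2 / (2 * L) ≤ f x - f y - ⟪g y, x - y⟫ := by
    intro x y
    have h1 := up x (x - L⁻¹ • (g x - g y))
    have h2 := low y (x - L⁻¹ • (g x - g y))
    have e1 : x - L⁻¹ • (g x - g y) - x = - (L⁻¹ • (g x - g y)) := by abel
    have e2 : x - L⁻¹ • (g x - g y) - y = (x - y) - (L⁻¹ • (g x - g y)) := by abel
    rw [e1, norm_neg, norm_smul, inner_neg_right, inner_smul_right, mul_pow,
      Real.norm_eq_abs, sq_abs] at h1
    rw [e2, inner_neg_left, inner_sub_right, inner_smul_right] at h2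
    have e3 : ‖g x - g y‖ ^ 2 = ⟪g x, g x - g y⟫ - ⟪g y, g x - g y⟫ := by
      rw [← inner_sub_left, real_inner_self_eq_norm_sq]
    have e4 : L / 2 * (L⁻¹ ^ 2 * ‖g x - g y‖ ^ 2) = ‖g x - g y‖ ^ 2 / (2 * L) := by
      field_simp
    have e5 : L⁻¹ * ⟪g x, g x - g y⟫ - L⁻¹ * ⟪g y, g x - g y⟫ = 2 * (‖g x - g y‖ ^ 2 / (2 * L)) := by
      rw [e3]; field_simp
    rw [e4] at h1
    linarith
  have k1 := key x y
  have k2 := key y x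
  rw [norm_sub_rev, ← neg_sub x y, inner_neg_right] at k2
  rw [inner_sub_left]
  have : ‖g x - g y‖ ^ 2 / L ≤ ⟪g x, x - y⟫ - ⟪g y, x - y⟫ := by
    have : ‖g x - g y‖ ^ 2 / L = 2 * (‖g x - g y‖ ^ 2 / (2 * L)) := by field_simp
    linarith
  rwa [div_le_iff₀' hL] at this

lemma aux_contr (f : E → ℝ) (g : E → E) (hg : ∀ x, HasGradientAt f (g x) x) (L : ℝ) (hL : 0 < L)
    (m : ℝ) (hm0 : 0 < m) (hm : ∀ x y, m * ‖x - y‖ ^ 2 ≤ ⟪g x - g y, x - y⟫)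
    (hl : ∀ x y, ‖g x - g y‖ ≤ L * ‖x - y‖) (α : ℝ) (h0 : 0 < α) (h1 : α < 2 / L) :
    ∃ q : NNReal, q < 1 ∧ ∀ x y, ‖(x - α • g x) - (y - α • g y)‖ ≤ q * ‖x - y‖ := by
  have hαL : 0 < 2 - α * L := by
    rw [lt_div_iff₀ hL] at h1; linarith
  set c := max 0 (1 - α * (2 - α * L) * m) with hc
  have hc1 : c < 1 := by
    apply max_lt one_pos
    have : 0 < α * (2 - α * L) * m := by positivity
    linarith
  have hc0 : 0 ≤ c := le_max_left _ _
  refine ⟨Real.toNNReal (√c), ?_, ?_⟩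
  · rw [← NNReal.coe_lt_coe, Real.coe_toNNReal _ (Real.sqrt_nonneg c)]
    simpa [Real.sqrt_lt' one_pos] using hc1
  · intro x y
    rw [Real.coe_toNNReal _ (Real.sqrt_nonneg c)]
    refine le_of_sq_le_sq ?_ (mul_nonneg (Real.sqrt_nonneg c) (norm_nonneg _))
    rw [mul_pow, Real.sq_sqrt hc0]
    have e : (x - α • g x) - (y - α • g y) = (x - y) - α • (g x - g y) := by
      rw [smul_sub]; abel
    have co := aux_coco f g hg L hL (fun x y => le_trans (by positivity) (hm x y)) hl x y
    rw [e, norm_sub_sq_real, inner_smul_right, norm_smul, mul_pow, Real.norm_eq_abs, sq_abs,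
      real_inner_comm]
    have a1 := mul_le_mul_of_nonneg_left co (sq_nonneg α)
    have a2 := mul_le_mul_of_nonneg_left (hm x y) (mul_pos h0 hαL).le
    have a3 := mul_le_mul_of_nonneg_right (le_max_right 0 (1 - α * (2 - α * L) * m)) (sq_nonneg ‖x - y‖)
    rw [← hc] at a3
    nlinarith

end helpers



/-- **Theorem 4, total asynchrony for DGD-ATC.** Under strong convexity,
smoothness, the delay-free step-size condition `0 < α < 2/maxᵢ Lᵢ`, `W` symmetric
nonnegative stochastic positive definite, and total asynchrony, the asynchronous
DGD-ATC iterates converge to the unique fixed point of synchronous DGD-ATC. -/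
theorem stmt17 (n d : ℕ) (hn : 0 < n)
    (W : Fin n → Fin n → ℝ)
    (hWsymm : ∀ i j, W i j = W j i)
    (hWnonneg : ∀ i j, 0 ≤ W i j)
    (hWstoch : ∀ i, ∑ j, W i j = 1)
    (hWpd : ∀ v : Fin n → ℝ, v ≠ 0 → 0 < ∑ i, v i * ∑ j, W i j * v j)
    (f : Fin n → EuclideanSpace ℝ (Fin d) → ℝ)
    (f' : Fin n → EuclideanSpace ℝ (Fin d) → EuclideanSpace ℝ (Fin d))
    (hgrad : ∀ i x, HasGradientAt (f i) (f' i x) x)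
    (μ : Fin n → ℝ) (hμ : ∀ i, 0 < μ i)
    (hsc : ∀ i x y, μ i * ‖x - y‖ ^ 2 ≤ ⟪f' i x - f' i y, x - y⟫)
    (L : Fin n → ℝ) (hL : ∀ i, 0 < L i)
    (hlip : ∀ i x y, ‖f' i x - f' i y‖ ≤ L i * ‖x - y‖)
    (α : ℝ) (hα0 : 0 < α) (hα1 : ∀ i, α < 2 / L i)
    -- the asynchronous iterates, activation sets, and delayed indices
    (x : ℕ → Fin n → EuclideanSpace ℝ (Fin d))
    (K : Fin n → Set ℕ)
    (s : Fin n → Fin n → ℕ → ℕ)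
    (hs_le : ∀ i j k, s i j k ≤ k)
    (hs_self : ∀ i k, s i i k = k)
    -- the asynchronous DGD-ATC recursion
    (hupd : ∀ i k, k ∈ K i →
      x (k + 1) i = ∑ j, W i j • (x (s i j k) j - α • f' j (x (s i j k) j)))
    (hkeep : ∀ i k, k ∉ K i → x (k + 1) i = x k i)
    -- total asynchrony
    (hKinf : ∀ i, (K i).Infinite)
    (hstot : ∀ i j, 0 < W i j → Tendsto (fun k => s i j k) atTop atTop) :
    ∃ xstar : Fin n → EuclideanSpace ℝ (Fin d),
      (∀ i, xstar i = ∑ j, W i j • (xstar j - α • f' j (xstar j))) ∧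
      (∀ y : Fin n → EuclideanSpace ℝ (Fin d),
        (∀ i, y i = ∑ j, W i j • (y j - α • f' j (y j))) → y = xstar) ∧
      Tendsto x atTop (nhds xstar) := by

  have hq : ∀ j, ∃ q : NNReal, q < 1 ∧
      ∀ x y, ‖(x - α • f' j x) - (y - α • f' j y)‖ ≤ q * ‖x - y‖ := fun j =>
    aux_contr (f j) (f' j) (hgrad j) (L j) (hL j) (μ j) (hμ j) (hsc j) (hlip j) α hα0 (hα1 j)
  choose q' hq'1 hq' using hq
  obtain ⟨q, hq1, hq⟩ : ∃ q : NNReal, q < 1 ∧ ∀ j x y,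
      ‖(x - α • f' j x) - (y - α • f' j y)‖ ≤ q * ‖x - y‖ := by
    refine ⟨Finset.univ.sup q', ?_, fun j x y => (hq' j x y).trans ?_⟩
    · rw [Finset.sup_lt_iff (by simp)]
      exact fun j _ => hq'1 j
    · have : q' j ≤ Finset.univ.sup q' := Finset.le_sup (Finset.mem_univ j)
      gcongr
  have step : ∀ (i : Fin n) (u v : Fin n → EuclideanSpace ℝ (Fin d)) (B : ℝ),
      (∀ j, 0 < W i j → ‖u j - v j‖ ≤ B) →
      ‖∑ j, W i j • (u j - α • f' j (u j)) - ∑ j, W i j • (v j - α • f' j (v j))‖ ≤ q * B := by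
    intro i u v B hB
    rw [← Finset.sum_sub_distrib]
    calc _ ≤ ∑ j, ‖W i j • (u j - α • f' j (u j)) - W i j • (v j - α • f' j (v j))‖ :=
          norm_sum_le _ _
      _ ≤ ∑ j, W i j * (q * B) := by
          apply Finset.sum_le_sum
          intro j _
          rw [← smul_sub, norm_smul, Real.norm_of_nonneg (hWnonneg i j)]
          rcases (hWnonneg i j).eq_or_lt with h | h
          · simp [← h]
          · exact mul_le_mul_of_nonneg_left ((hq j _ _).trans
              (mul_le_mul_of_nonneg_left (hB j h) q.2)) h.le
      _ = q * B := by rw [← Finset.sum_mul, hWstoch, one_mul]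
  let T : (Fin n → EuclideanSpace ℝ (Fin d)) → (Fin n → EuclideanSpace ℝ (Fin d)) :=
    fun u i => ∑ j, W i j • (u j - α • f' j (u j))
  have hT : ContractingWith q T := by
    refine ⟨hq1, LipschitzWith.of_dist_le_mul fun u v => ?_⟩
    rw [dist_pi_le_iff (by positivity)]
    intro i
    rw [dist_eq_norm]
    refine step i u v _ fun j _ => ?_
    rw [← dist_eq_norm]
    exact dist_le_pi_dist u v j
  have hfix : ∀ i, hT.fixedPoint T i = T (hT.fixedPoint T) i := fun i =>
    congrFun hT.fixedPoint_isFixedPt.symm i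
  set z := hT.fixedPoint T with hz
  refine ⟨z, hfix, fun y hy => hT.fixedPoint_unique (funext fun i => (hy i).symm), ?_⟩
  have upd : ∀ i k B, k ∈ K i → (∀ j, 0 < W i j → ‖x (s i j k) j - z j‖ ≤ B) →
      ‖x (k + 1) i - z i‖ ≤ q * B := by
    intro i k B hk hB
    rw [hupd i k hk, hfix i]
    exact step i (fun j => x (s i j k) j) z B hB
  set C := ‖x 0 - z‖ with hC
  have hC0 : 0 ≤ C := norm_nonneg _
  have bdd : ∀ k i, ‖x k i - z i‖ ≤ C := by
    intro k
    induction k using Nat.strong_induction_on with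
    | _ k ih =>
      intro i
      cases k with
      | zero => exact norm_le_pi_norm (x 0 - z) i
      | succ k =>
        by_cases hk : k ∈ K i
        · have h1 := upd i k C hk fun j _ => ih _ (Nat.lt_succ_of_le (hs_le i j k)) j
          have h2 : (q : ℝ) ≤ 1 := by exact_mod_cast hq1.le
          nlinarith
        · rw [hkeep i k hk]
          exact ih k (Nat.lt_succ_self k) i
  have main : ∀ m : ℕ, ∃ N, ∀ k ≥ N, ∀ i, ‖x k i - z i‖ ≤ q ^ m * C := by
    intro m
    induction m with
    | zero => exact ⟨0, fun k _ i => by simpa using bdd k i⟩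
    | succ m ih =>
      obtain ⟨N, hN⟩ := ih
      have hev : ∀ᶠ k in atTop, ∀ i j, 0 < W i j → N ≤ s i j k := by
        rw [eventually_all]; intro i
        rw [eventually_all]; intro j
        by_cases h : 0 < W i j
        · filter_upwards [(hstot i j h).eventually_ge_atTop N] with k hk _ using hk
        · exact Eventually.of_forall fun k hk => absurd hk h
      obtain ⟨N', hN'⟩ := eventually_atTop.1 hev
      have hupd' : ∀ i k, N' ≤ k → k ∈ K i → ‖x (k + 1) i - z i‖ ≤ q ^ (m + 1) * C := by
        intro i k hk hki
        have := upd i k _ hki fun j hj => hN _ (hN' k hk i j hj) j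
        rw [pow_succ']
        linarith
      have hex : ∀ i, ∃ k ∈ K i, N' < k := fun i => (hKinf i).exists_gt N'
      choose p hpK hpN using hex
      refine ⟨Finset.univ.sup p + 1, fun k hk i => ?_⟩
      have hpk : p i + 1 ≤ k := le_trans
        (Nat.succ_le_succ (Finset.le_sup (f := p) (Finset.mem_univ i))) hk
      clear hk
      induction k, hpk using Nat.le_induction with
      | base => exact hupd' i _ (hpN i).le (hpK i)
      | succ k hk ih =>
        by_cases hki : k ∈ K i
        · exact hupd' i k (by have := hpN i; omega) hki
        · rw [hkeep i k hki]; exact ih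
  rw [tendsto_pi_nhds]
  intro i
  rw [Metric.tendsto_atTop]
  intro ε hε
  have hlim : Tendsto (fun m : ℕ => (q : ℝ) ^ m * C) atTop (nhds 0) := by
    simpa using (tendsto_pow_atTop_nhds_zero_of_lt_one q.2
      (by exact_mod_cast hq1)).mul_const C
  obtain ⟨m, hm⟩ := (hlim.eventually (gt_mem_nhds hε)).exists
  obtain ⟨N, hN⟩ := main m
  exact ⟨N, fun k hk => by rw [dist_eq_norm]; exact (hN k hk i).trans_lt hm⟩
end
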